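/- Let n >= 3 and i = 3. For every nonnegative integer m, S(D, m*omega_3) equals the floor(m/2)-fold Minkowski sum S(D, 2*omega_3) + ... + S(D, 2*omega_3), plus one additional summand S(D, omega_3) when m is odd (the 0-fold Minkowski sum is {0}). -/

import Mathlib

open scoped Pointwise

/-- A single step in a Dyck path: `α_{p,q} → α_{p,q+1}` or `α_{p,q} → α_{p+1,q}`. -/
def RootStep (a b : ℕ × ℕ) : Prop :=
  (b.1 = a.1 ∧ b.2 = a.2 + 1) ∨ (b.1 = a.1 + 1 ∧ b.2 = a.2)

/-- `inR n i (p,q)` means that `α_{p,q}` is a positive root of `B_n`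
(`1 ≤ p ≤ n`, `p ≤ q ≤ 2n-p`) belonging to `R_i^+`, i.e. `p ≤ i ≤ q`. -/
def inR (n i : ℕ) (a : ℕ × ℕ) : Prop :=
  1 ≤ a.1 ∧ a.1 ≤ i ∧ i ≤ a.2 ∧ a.1 + a.2 ≤ 2 * n

/-- A type 1 Dyck path for `R_i^+` of `B_n`, recorded as the list of its roots. -/
def IsType1 (n i : ℕ) (L : List (ℕ × ℕ)) : Prop :=
  L ≠ [] ∧ L.Chain' RootStep ∧ (∀ x ∈ L, inR n i x) ∧
    ((L.head? = some (1, i) ∧ L.getLast? = some (i, 2 * n - i - 1)) ∨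
     (L.head? = some (1, i + 1) ∧ L.getLast? = some (i, 2 * n - i)))

/-- A type 2 (double) Dyck path for `R_i^+` of `B_n`, recorded as the pair of lists of
roots of its two constituent single paths. -/
def IsType2 (n i : ℕ) (L1 L2 : List (ℕ × ℕ)) : Prop :=
  ∃ j : ℕ, 1 ≤ j ∧ j < i ∧
    L1 ≠ [] ∧ L2 ≠ [] ∧ L1.Chain' RootStep ∧ L2.Chain' RootStep ∧
    (∀ x ∈ L1, inR n i x) ∧ (∀ x ∈ L2, inR n i x) ∧
    L1.head? = some (1, i) ∧ L2.head? = some (2, i) ∧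
    L1.getLast? = some (j, 2 * n - j) ∧ L2.getLast? = some (j + 1, 2 * n - j - 1) ∧
    (∀ x, ¬(x ∈ L1 ∧ x ∈ L2))

/-- The constant `c_i`: `1` if `i = 1` or `i = n`, and `2` if `2 ≤ i ≤ n-1`. -/
def cB (n i : ℕ) : ℕ := if i = 1 ∨ i = n then 1 else 2

/-- `SD n i m` is the set `S(D, m·ω_i)` of lattice points of the Dyck-path polytope:
multi-exponents `s` supported on `R_i^+` with `∑_{β ∈ p} s_β ≤ m` for every type 1
Dyck path `p` and `∑_{β ∈ p} s_β ≤ m·c_i` for every type 2 Dyck path `p`.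
(Elements of a Dyck path are pairwise distinct, so summation over the recording
lists agrees with summation over the underlying set of roots.) -/
def SD (n i m : ℕ) : Set ((ℕ × ℕ) → ℕ) :=
  {s | (∀ β, ¬ inR n i β → s β = 0) ∧
       (∀ L, IsType1 n i L → (L.map s).sum ≤ m) ∧
       (∀ L1 L2, IsType2 n i L1 L2 → ((L1 ++ L2).map s).sum ≤ m * cB n i)}

/-- Sum of the first `x` values of `f`. -/
def psum (f : ℕ → ℕ) (x : ℕ) : ℕ := ∑ k ∈ Finset.range x, f k

theorem psum_zero (f : ℕ → ℕ) : psum f 0 = 0 := rfl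

theorem psum_succ (f : ℕ → ℕ) (x : ℕ) : psum f (x + 1) = psum f x + f x :=
  Finset.sum_range_succ f x

theorem psum_add (f g : ℕ → ℕ) (x : ℕ) : psum (f + g) x = psum f x + psum g x :=
  Finset.sum_add_distrib

theorem psum_zero_fun (x : ℕ) : psum 0 x = 0 := by simp [psum]

theorem psum_single (u x : ℕ) : psum (Pi.single u 1) x = if u < x then 1 else 0 := by
  simp [psum, Finset.sum_pi_single']

theorem psum_mono (f : ℕ → ℕ) {x y : ℕ} (h : x ≤ y) : psum f x ≤ psum f y :=
  Finset.sum_le_sum_of_subset (by simpa using h)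

theorem psum_congr {f g : ℕ → ℕ} {x : ℕ} (h : ∀ k < x, f k = g k) : psum f x = psum g x :=
  Finset.sum_congr rfl fun k hk => h k (by simpa using hk)

theorem psum_eq_of_zero {f : ℕ → ℕ} {x y : ℕ} (hxy : x ≤ y)
    (h : ∀ k, x ≤ k → k < y → f k = 0) : psum f x = psum f y := by
  induction y, hxy using Nat.le_induction with
  | base => rfl
  | succ y hy ih =>
    rw [psum_succ, ← ih fun k h1 h2 => h k h1 (by omega), h y hy (by omega), add_zero]

theorem exists_pos_of_psum_lt {f : ℕ → ℕ} {x y : ℕ} (h : psum f x < psum f y) :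
    ∃ k, x ≤ k ∧ k < y ∧ 0 < f k := by
  by_contra! hc
  rcases le_total x y with hxy | hxy
  · exact h.ne (psum_eq_of_zero hxy fun k h1 h2 => Nat.le_zero.mp (hc k h1 h2))
  · exact absurd (psum_mono f hxy) (by omega)

theorem exists_eq_single_add {f : ℕ → ℕ} {u : ℕ} (h : 0 < f u) :
    ∃ g : ℕ → ℕ, f = Pi.single u 1 + g := by
  refine ⟨f - Pi.single u 1, ?_⟩
  funext k
  by_cases hk : k = u
  · subst hk; simp; omega
  · simp [hk]

theorem exists_last_pos {f : ℕ → ℕ} {x y k : ℕ} (hx : x ≤ k) (hy : k < y) (hk : 0 < f k) :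
    ∃ l, x ≤ l ∧ l < y ∧ 0 < f l ∧ ∀ j, l < j → j < y → f j = 0 := by
  obtain ⟨l, hl, hmax⟩ := ((Finset.Ico x y).filter fun l => 0 < f l).exists_max_image id
    ⟨k, by simp [hx, hy, hk]⟩
  simp only [Finset.mem_filter, Finset.mem_Ico, id] at hl hmax
  refine ⟨l, hl.1.1, hl.1.2, hl.2, fun j h1 h2 => ?_⟩
  by_contra h
  exact absurd (hmax j ⟨⟨by omega, h2⟩, by omega⟩) (by omega)

theorem exists_first_pos {f : ℕ → ℕ} {x y k : ℕ} (hx : x ≤ k) (hy : k < y) (hk : 0 < f k) :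
    ∃ l, x ≤ l ∧ l < y ∧ 0 < f l ∧ ∀ j, x ≤ j → j < l → f j = 0 := by
  obtain ⟨l, hl, hmin⟩ := ((Finset.Ico x y).filter fun l => 0 < f l).exists_min_image id
    ⟨k, by simp [hx, hy, hk]⟩
  simp only [Finset.mem_filter, Finset.mem_Ico, id] at hl hmin
  refine ⟨l, hl.1.1, hl.1.2, hl.2, fun j h1 h2 => ?_⟩
  by_contra h
  exact absurd (hmin j ⟨⟨h1, by omega⟩, by omega⟩) (by omega)

/-- The type 1 inequalities on three rows `a`, `b`, `c`; `u` and `v` are the turning columns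
of the path. -/
structure SingleBound (L m : ℕ) (a b c : ℕ → ℕ) : Prop where
  lower : ∀ u v, u ≤ v → v ≤ L →
    psum a (u + 1) + psum b (v + 1) + psum c (L + 1) ≤ m + psum b u + psum c v
  upper : ∀ u v, 1 ≤ u → u ≤ v → v ≤ L + 1 →
    psum a (u + 1) + psum b (v + 1) + psum c (L + 2) ≤ m + psum a 1 + psum b u + psum c v

/-- The type 2 inequalities with `j = 2`; `u` and `v` are the turning columns of the upper and
the lower path. -/
def DoubleBound (L m : ℕ) (a b c : ℕ → ℕ) : Prop :=
  ∀ u v, v < u → u ≤ L + 2 → v ≤ L + 1 →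
    psum a (u + 1) + psum b (v + 1) + psum b (L + 3) + psum c (L + 2) ≤
      2 * m + psum b u + psum c v

/-- A summand of level one or two can be split off. -/
def Splits (L m : ℕ) (a b c : ℕ → ℕ) : Prop :=
  ∃ r, 1 ≤ r ∧ r ≤ 2 ∧ r ≤ m ∧ ∃ a₁ b₁ c₁ a₂ b₂ c₂ : ℕ → ℕ,
    a = a₁ + a₂ ∧ b = b₁ + b₂ ∧ c = c₁ + c₂ ∧
    (SingleBound L r a₁ b₁ c₁ ∧ DoubleBound L r a₁ b₁ c₁) ∧
    (SingleBound L (m - r) a₂ b₂ c₂ ∧ DoubleBound L (m - r) a₂ b₂ c₂)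

theorem splits_corners {L m : ℕ} {a b c : ℕ → ℕ} (h1 : SingleBound L m a b c)
    (h2 : DoubleBound L m a b c) (ha : 0 < a 0) (hc : 0 < c (L + 1)) : Splits L m a b c := by
  obtain ⟨a', rfl⟩ := exists_eq_single_add ha
  obtain ⟨c', rfl⟩ := exists_eq_single_add hc
  have hm : 1 ≤ m := by
    have := h1.lower 0 0 le_rfl (by omega)
    have := psum_mono (Pi.single (L + 1) 1 + c') (show 0 ≤ L + 1 by omega)
    have e := psum_succ (Pi.single 0 1 + a') 0
    simp only [psum_zero] at *
    omega
  refine ⟨1, le_rfl, by omega, hm, Pi.single 0 1, 0, Pi.single (L + 1) 1, a', b, c',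
    rfl, by simp, rfl, ⟨⟨?_, ?_⟩, ?_⟩, ⟨⟨?_, ?_⟩, ?_⟩⟩
  · intro u v huv hv
    simp only [psum_single, psum_zero_fun]
    split_ifs <;> omega
  · intro u v hu huv hv
    simp only [psum_single, psum_zero_fun]
    split_ifs <;> omega
  · intro u v hvu hu hv
    simp only [psum_single, psum_zero_fun]
    split_ifs <;> omega
  · intro u v huv hv
    have := h1.lower u v huv hv
    simp only [psum_single, psum_add] at this
    split_ifs at this <;> omega
  · intro u v hu huv hv
    have := h1.upper u v hu huv hv
    simp only [psum_single, psum_add] at this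
    split_ifs at this <;> omega
  · intro u v hvu hu hv
    have := h2 u v hvu hu hv
    simp only [psum_single, psum_add] at this
    split_ifs at this <;> omega

theorem psum_eq_add_of_eq_single_add {f g : ℕ → ℕ} {u : ℕ} (h : f = Pi.single u 1 + g) (x : ℕ) :
    psum f x = (if u < x then 1 else 0) + psum g x := by
  rw [h, psum_add, psum_single]

set_option maxHeartbeats 800000 in
theorem splits_triple {L m u v w : ℕ} {a b c : ℕ → ℕ} (h1 : SingleBound L m a b c)
    (h2 : DoubleBound L m a b c) (hvw : v < w) (hwu : w < u) (hu : u ≤ L + 2)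
    (hw : w ≤ L ∨ w = L + 1 ∧ psum a (L + 1) < m)
    (hau : 0 < a u) (hbw : 0 < b w) (hcv : 0 < c v)
    (hb : ∀ j, v < j → j < w → b j = 0) (hc : ∀ j, v < j → j < w → c j = 0)
    (ha : ∀ j, w < j → j < u → a j = 0) : Splits L m a b c := by
  have pb : ∀ x, v < x → x ≤ w → psum b x = psum b (v + 1) := fun x h h' =>
    (psum_eq_of_zero h fun j h3 h4 => hb j h3 (by omega)).symm
  have pc : ∀ x, v < x → x ≤ w → psum c x = psum c (v + 1) := fun x h h' =>
    (psum_eq_of_zero h fun j h3 h4 => hc j h3 (by omega)).symm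
  have pa : ∀ x, w < x → x ≤ u → psum a x = psum a (w + 1) := fun x h h' =>
    (psum_eq_of_zero h fun j h3 h4 => ha j h3 (by omega)).symm
  have sb := psum_succ b w
  have sc := psum_succ c v
  have hm : 1 ≤ m := by
    rcases hw with hw | hw
    · have := h1.lower w w le_rfl hw
      have := psum_mono c (show w ≤ L + 1 by omega)
      omega
    · omega
  obtain ⟨a', ha'⟩ := exists_eq_single_add hau
  obtain ⟨b', hb'⟩ := exists_eq_single_add hbw
  obtain ⟨c', hc'⟩ := exists_eq_single_add hcv
  have ea := psum_eq_add_of_eq_single_add ha'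
  have eb := psum_eq_add_of_eq_single_add hb'
  have ec := psum_eq_add_of_eq_single_add hc'
  refine ⟨1, le_rfl, by omega, hm, _, _, _, a', b', c', ha', hb', hc',
    ⟨⟨?_, ?_⟩, ?_⟩, ⟨⟨?_, ?_⟩, ?_⟩⟩
  · intro U V hUV hV
    simp only [psum_single]
    split_ifs <;> omega
  · intro U V hU hUV hV
    simp only [psum_single]
    split_ifs <;> omega
  · intro U V hVU hU hV
    simp only [psum_single]
    split_ifs <;> omega
  · intro U V hUV hV
    suffices h : psum a (U + 1) + psum b (V + 1) + psum c (L + 1) +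
        (if u ≤ U ∨ (U ≤ w ∧ w ≤ V) ∨ V ≤ v then 0 else 1) ≤ m + psum b U + psum c V by
      simp only [ea, eb, ec] at h
      split_ifs at h <;> omega
    have h := h1.lower U V hUV hV
    split_ifs with hif
    · exact h
    push Not at hif
    by_cases hwU : w < U
    · have := h1.lower w V (by omega) hV
      have := pa (U + 1) (by omega) (by omega)
      have := psum_mono b (show w + 1 ≤ U by omega)
      omega
    have e1 := pb (V + 1) (by omega) (by omega)
    have e2 := pc V (by omega) (by omega)
    by_cases hUv : U ≤ v
    · have := h1.lower U v hUv (by omega)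
      omega
    have e3 := pb w (by omega) (by omega)
    have e4 := pc w (by omega) (by omega)
    rcases hw with hw | ⟨rfl, hA⟩
    · have := h1.lower U w (by omega) hw
      omega
    · have := pb U (by omega) (by omega)
      have := psum_mono a (show U + 1 ≤ L + 1 by omega)
      omega
  · intro U V hU hUV hV
    suffices h : psum a (U + 1) + psum b (V + 1) + psum c (L + 2) +
        (if u ≤ U ∨ (U ≤ w ∧ w ≤ V) ∨ V ≤ v then 0 else 1) ≤
          m + psum a 1 + psum b U + psum c V by
      simp only [ea, eb, ec] at h
      split_ifs at h <;> omega
    have h := h1.upper U V hU hUV hV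
    split_ifs with hif
    · exact h
    push Not at hif
    by_cases hwU : w < U
    · have := h1.upper w V (by omega) (by omega) hV
      have := pa (U + 1) (by omega) (by omega)
      have := psum_mono b (show w + 1 ≤ U by omega)
      omega
    have e1 := pb (V + 1) (by omega) (by omega)
    have e2 := pc V (by omega) (by omega)
    by_cases hUv : U ≤ v
    · have := h1.upper U v hU hUv (by omega)
      omega
    have e3 := pb w (by omega) (by omega)
    have e4 := pc w (by omega) (by omega)
    have := h1.upper U w hU (by omega) (by omega)
    omega
  · intro U V hVU hU hV
    suffices h : psum a (U + 1) + psum b (V + 1) + psum b (L + 3) + psum c (L + 2) + 2 ≤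
        2 * m + psum b U + psum c V + (if u ≤ U then 1 else 0) +
          (if w ≤ V ∨ U ≤ w then 1 else 0) + (if V ≤ v then 1 else 0) by
      simp only [ea, eb, ec] at h
      split_ifs at h <;> omega
    have h := h2 U V hVU hU hV
    by_cases hVv : V ≤ v
    · by_cases huU : u ≤ U
      · split_ifs <;> omega
      · by_cases hUw : U ≤ w
        · split_ifs <;> omega
        · have := h2 w V (by omega) (by omega) hV
          have := pa (U + 1) (by omega) (by omega)
          have := psum_mono b (show w + 1 ≤ U by omega)
          split_ifs <;> omega
    · have hcV := psum_mono c (show v + 1 ≤ V by omega)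
      by_cases hwV : w ≤ V
      · by_cases huU : u ≤ U
        · split_ifs <;> omega
        · have := h2 w v (by omega) (by omega) (by omega)
          have := pa (U + 1) (by omega) (by omega)
          have := pb w (by omega) (by omega)
          have := psum_mono b (show V + 1 ≤ U by omega)
          split_ifs <;> omega
      · have e1 := pb (V + 1) (by omega) (by omega)
        have e2 := pc V (by omega) (by omega)
        by_cases hUw : U ≤ w
        · have := h2 U v (by omega) (by omega) (by omega)
          split_ifs <;> omega
        · have e3 := psum_mono b (show w + 1 ≤ U by omega)
          by_cases huU : u ≤ U
          · have := h2 U v (by omega) (by omega) (by omega)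
            split_ifs <;> omega
          · have := h2 w v (by omega) (by omega) (by omega)
            have := pa (U + 1) (by omega) (by omega)
            have := pb w (by omega) (by omega)
            split_ifs <;> omega

theorem splits_of_exists_triple {L m u v w : ℕ} {a b c : ℕ → ℕ} (h1 : SingleBound L m a b c)
    (h2 : DoubleBound L m a b c) (hvw : v < w) (hwu : w < u) (hu : u ≤ L + 2)
    (hw : w ≤ L ∨ w = L + 1 ∧ psum a (L + 1) < m)
    (hau : 0 < a u) (hbw : 0 < b w) (hcv : 0 < c v) : Splits L m a b c := by
  obtain ⟨w', hw1, hw2, hw3, hw4⟩ := exists_first_pos (x := v + 1) (y := w + 1) hvw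
    (by omega) hbw
  obtain ⟨v', hv1, hv2, hv3, hv4⟩ := exists_last_pos (x := v) (y := w') le_rfl (by omega) hcv
  obtain ⟨u', hu1, hu2, hu3, hu4⟩ := exists_first_pos (x := w' + 1) (y := u + 1) (k := u)
    (by omega) (by omega) hau
  exact splits_triple h1 h2 hv2 (by omega) (by omega) (by omega) hu3 hw3 hv3
    (fun j h h' => hw4 j (by omega) h') hv4 (fun j h h' => hu4 j h h')

/-- Right end points of consecutive intervals of lengths `f k`, where the `k`-th interval does
not begin before `s k`. -/
def stackEnd (s f : ℕ → ℕ) : ℕ → ℕ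
  | 0 => s 0 + f 0
  | k + 1 => max (s (k + 1)) (stackEnd s f k) + f (k + 1)

theorem le_stackEnd (s f : ℕ → ℕ) (k : ℕ) : s k + f k ≤ stackEnd s f k := by
  cases k <;> simp [stackEnd]

theorem stackEnd_le_succ (s f : ℕ → ℕ) (k : ℕ) :
    stackEnd s f k + f (k + 1) ≤ stackEnd s f (k + 1) := by
  simp [stackEnd]

theorem exists_stackEnd_eq (s f : ℕ → ℕ) (v : ℕ) :
    ∃ u ≤ v, stackEnd s f v + psum f u = s u + psum f (v + 1) := by
  induction v with
  | zero => exact ⟨0, le_rfl, by simp [stackEnd, psum_succ, psum_zero]⟩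
  | succ k ih =>
    obtain ⟨u, hu, h⟩ := ih
    rcases le_total (s (k + 1)) (stackEnd s f k) with hk | hk
    · refine ⟨u, by omega, ?_⟩
      rw [psum_succ, stackEnd, max_eq_right hk]
      omega
    · refine ⟨k + 1, le_rfl, ?_⟩
      rw [psum_succ f (k + 1), stackEnd, max_eq_left hk]
      omega

/-- The part of the interval `[e k - f k, e k]` seen by `φ`. -/
def layer (φ e f : ℕ → ℕ) (k : ℕ) : ℕ := φ (e k) - φ (e k - f k)

theorem psum_layer_le {φ e f : ℕ → ℕ} (hφ : Monotone φ) (he : ∀ k, e k + f (k + 1) ≤ e (k + 1))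
    {u v : ℕ} (huv : u ≤ v) :
    psum (layer φ e f) (v + 1) + φ (e u - f u) ≤ psum (layer φ e f) u + φ (e v) := by
  induction v, huv using Nat.le_induction with
  | base =>
    have := hφ (Nat.sub_le (e u) (f u))
    rw [psum_succ, layer]
    omega
  | succ v hv ih =>
    have h1 := hφ (show e v ≤ e (v + 1) - f (v + 1) by have := he v; omega)
    have h2 := hφ (Nat.sub_le (e (v + 1)) (f (v + 1)))
    rw [psum_succ, layer]
    omega

theorem singleBound_layer {L m r : ℕ} {a b c φ e₁ e₂ e₃ : ℕ → ℕ} (hφ : Monotone φ)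
    (hr : ∀ x, φ (x + m) = φ x + r)
    (h₁ : ∀ k, e₁ k + a (k + 1) ≤ e₁ (k + 1)) (h₂ : ∀ k, e₂ k + b (k + 1) ≤ e₂ (k + 1))
    (h₃ : ∀ k, e₃ k + c (k + 1) ≤ e₃ (k + 1)) (h₁₂ : ∀ k, e₁ k + b k ≤ e₂ k)
    (h₂₃ : ∀ k, e₂ k + c k ≤ e₃ k) (hlower : e₃ L ≤ m)
    (hupper : e₃ (L + 1) ≤ e₁ 1 - a 1 + m) :
    SingleBound L r (layer φ e₁ a) (layer φ e₂ b) (layer φ e₃ c) := by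
  constructor
  · intro u v huv hv
    have t1 := psum_layer_le hφ h₁ (show 0 ≤ u by omega)
    have t2 := psum_layer_le hφ h₂ huv
    have t3 := psum_layer_le hφ h₃ hv
    have i1 := hφ (show e₁ u ≤ e₂ u - b u by have := h₁₂ u; omega)
    have i2 := hφ (show e₂ v ≤ e₃ v - c v by have := h₂₃ v; omega)
    have i3 := hφ hlower
    have i4 := hφ (Nat.zero_le (e₁ 0 - a 0))
    have := hr 0
    rw [zero_add] at this
    rw [psum_zero] at t1
    omega
  · intro u v hu huv hv
    have t1 := psum_layer_le hφ h₁ hu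
    have t2 := psum_layer_le hφ h₂ huv
    have t3 := psum_layer_le hφ h₃ hv
    have i1 := hφ (show e₁ u ≤ e₂ u - b u by have := h₁₂ u; omega)
    have i2 := hφ (show e₂ v ≤ e₃ v - c v by have := h₂₃ v; omega)
    have i3 := hφ hupper
    have := hr (e₁ 1 - a 1)
    rw [show L + 2 = L + 1 + 1 from rfl]
    omega

theorem layer_add_layer {φ ψ e f : ℕ → ℕ} (hφ : Monotone φ) (hψ : Monotone ψ)
    (h : ∀ x, φ x + ψ x = x) (hf : ∀ k, f k ≤ e k) : f = layer φ e f + layer ψ e f := by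
  funext k
  have h1 := hφ (Nat.sub_le (e k) (f k))
  have h2 := hψ (Nat.sub_le (e k) (f k))
  have h3 := h (e k)
  have h4 := h (e k - f k)
  have h5 := hf k
  simp only [Pi.add_apply, layer]
  omega

theorem SingleBound.exists_split {L m : ℕ} {a b c : ℕ → ℕ} (h : SingleBound L m a b c)
    (hm : 1 ≤ m) :
    ∃ a₁ b₁ c₁ a₂ b₂ c₂ : ℕ → ℕ, a = a₁ + a₂ ∧ b = b₁ + b₂ ∧ c = c₁ + c₂ ∧
      SingleBound L 1 a₁ b₁ c₁ ∧ SingleBound L (m - 1) a₂ b₂ c₂ := by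
  obtain ⟨w, hw, hG⟩ := (Finset.range (L + 2)).exists_max_image
    (fun v => psum b (v + 1) + psum c (L + 2) - psum c v) ⟨0, by simp⟩
  simp only [Finset.mem_range] at hw hG
  have hcL : ∀ v < L + 2, psum c v ≤ psum c (L + 2) := fun v hv => psum_mono c hv.le
  obtain ⟨G, hGdef⟩ : ∃ G, G = psum b (w + 1) + psum c (L + 2) - psum c w := ⟨_, rfl⟩
  rw [← hGdef] at hG
  obtain ⟨D, hD⟩ : ∃ D, D = G - m := ⟨_, rfl⟩
  set e₁ : ℕ → ℕ := fun k => psum a (k + 1) + if k = 0 then 0 else D with he₁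
  set e₂ := stackEnd e₁ b
  set e₃ := stackEnd e₂ c
  have e₁0 : e₁ 0 = psum a 1 := by simp [he₁]
  have e₁s : ∀ k, 1 ≤ k → e₁ k = psum a (k + 1) + D := fun k hk => by
    simp only [he₁]
    rw [if_neg (by omega)]
  have h₁ : ∀ k, e₁ k + a (k + 1) ≤ e₁ (k + 1) := fun k => by
    rw [e₁s (k + 1) (by omega), psum_succ a (k + 1)]
    rcases Nat.eq_zero_or_pos k with rfl | hk
    · rw [e₁0, zero_add]
      omega
    · rw [e₁s k hk]
      omega
  have hlower : e₃ L ≤ m := by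
    obtain ⟨v, hv, hv'⟩ := exists_stackEnd_eq e₂ c L
    obtain ⟨u, hu, hu'⟩ := exists_stackEnd_eq e₁ b v
    have hv'' : e₃ L + psum c v = e₂ v + psum c (L + 1) := hv'
    have hu'' : e₂ v + psum b u = e₁ u + psum b (v + 1) := hu'
    have l1 := h.lower u v hu hv
    rcases Nat.eq_zero_or_pos u with rfl | hu0
    · simp only [zero_add] at l1
      omega
    · rw [e₁s u hu0] at hu''
      rcases le_total G m with hGm | hGm
      · omega
      · have := hcL w hw
        rcases le_total w v with hwv | hwv
        · have := h.upper u v hu0 hu (by omega)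
          have := h.lower 0 w (by omega) (by omega)
          simp only [psum_zero, zero_add] at this
          omega
        · have := h.upper u w hu0 (by omega) (by omega)
          have := h.lower 0 v (by omega) (by omega)
          simp only [psum_zero, zero_add] at this
          omega
  have hupper : e₃ (L + 1) ≤ e₁ 1 - a 1 + m := by
    obtain ⟨v, hv, hv'⟩ := exists_stackEnd_eq e₂ c (L + 1)
    obtain ⟨u, hu, hu'⟩ := exists_stackEnd_eq e₁ b v
    have hv'' : e₃ (L + 1) + psum c v = e₂ v + psum c (L + 2) := hv'
    have hu'' : e₂ v + psum b u = e₁ u + psum b (v + 1) := hu'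
    have s1 := e₁s 1 le_rfl
    have s2 := psum_succ a 1
    rcases Nat.eq_zero_or_pos u with rfl | hu0
    · have := hG v (by omega)
      have := hcL v (by omega)
      rw [psum_zero] at hu''
      omega
    · rw [e₁s u hu0] at hu''
      have := h.upper u v hu0 hu hv
      omega
  have hφ : Monotone fun x => x / m := fun x y hxy => Nat.div_le_div_right hxy
  have hφm : ∀ x, (x + m) / m = x / m + 1 := fun x => Nat.add_div_right x hm
  have hψ : Monotone fun x => x - x / m := by
    refine monotone_nat_of_le_succ fun x => ?_
    have := Nat.div_le_self x m
    have : (x + 1) / m ≤ x / m + 1 := by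
      rw [← hφm]
      exact hφ (by omega)
    omega
  have hψm : ∀ x, x + m - (x + m) / m = x - x / m + (m - 1) := fun x => by
    have := Nat.div_le_self x m
    rw [hφm]
    omega
  have hsum : ∀ x, x / m + (x - x / m) = x := fun x => by
    have := Nat.div_le_self x m
    omega
  have b₁ : ∀ k, a k ≤ e₁ k := fun k => by
    simp only [he₁, psum_succ a k]
    omega
  have b₂ : ∀ k, e₁ k + b k ≤ e₂ k := le_stackEnd e₁ b
  have b₃ : ∀ k, e₂ k + c k ≤ e₃ k := le_stackEnd e₂ c
  refine ⟨_, _, _, _, _, _, layer_add_layer hφ hψ hsum b₁,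
    layer_add_layer hφ hψ hsum (e := e₂) fun k => by have := b₂ k; omega,
    layer_add_layer hφ hψ hsum (e := e₃) fun k => by have := b₃ k; omega, ?_, ?_⟩
  · exact singleBound_layer hφ hφm h₁ (stackEnd_le_succ e₁ b) (stackEnd_le_succ e₂ c) b₂ b₃
      hlower hupper
  · exact singleBound_layer hψ hψm h₁ (stackEnd_le_succ e₁ b) (stackEnd_le_succ e₂ c) b₂ b₃
      hlower hupper

theorem psum_update_of_le (f : ℕ → ℕ) {k y : ℕ} (x : ℕ) (h : y ≤ k) :
    psum (Function.update f k x) y = psum f y :=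
  psum_congr fun j hj => Function.update_of_ne (by omega) x f

theorem psum_update_succ (f : ℕ → ℕ) (k x : ℕ) :
    psum (Function.update f k x) (k + 1) = psum f k + x := by
  rw [psum_succ, Function.update_self, psum_update_of_le f x le_rfl]

theorem eq_update_add_update {f f₁ f₂ : ℕ → ℕ} {k x : ℕ} (hf : f = f₁ + f₂) (hx : x ≤ f k) :
    f = Function.update f₁ k x + Function.update f₂ k (f k - x) := by
  funext j
  by_cases hj : j = k
  · subst hj
    simp only [Pi.add_apply, Function.update_self]
    omega
  · simp only [Pi.add_apply, Function.update_of_ne hj]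
    rw [hf, Pi.add_apply]

theorem SingleBound.congr {L m : ℕ} {a b c a' b' : ℕ → ℕ} (h : SingleBound L m a b c)
    (ha : ∀ k < L + 2, a k = a' k) (hb : ∀ k < L + 2, b k = b' k) : SingleBound L m a' b' c := by
  have ea : ∀ x ≤ L + 2, psum a' x = psum a x := fun x hx =>
    psum_congr fun k hk => (ha k (by omega)).symm
  have eb : ∀ x ≤ L + 2, psum b' x = psum b x := fun x hx =>
    psum_congr fun k hk => (hb k (by omega)).symm
  constructor
  · intro u v huv hv
    rw [ea _ (by omega), eb _ (by omega), eb _ (by omega)]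
    exact h.lower u v huv hv
  · intro u v hu huv hv
    rw [ea _ (by omega), ea _ (by omega), eb _ (by omega), eb _ (by omega)]
    exact h.upper u v hu huv hv

theorem doubleBound_of_total_le {L m : ℕ} {a b c : ℕ → ℕ}
    (h : psum a (L + 3) + psum b (L + 3) + psum c (L + 2) ≤ 2 * m) : DoubleBound L m a b c := by
  intro u v hvu hu hv
  have := psum_mono a (show u + 1 ≤ L + 3 by omega)
  have := psum_mono b (show v + 1 ≤ u by omega)
  omega

theorem exists_cut {L : ℕ} {a b c : ℕ → ℕ}
    (h : ∀ v w u, v < w → w < u → u ≤ L + 2 → 0 < c v → 0 < b w → a u = 0) :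
    ∃ U V, V < U ∧ U ≤ L + 2 ∧ V ≤ L + 1 ∧ psum c V = 0 ∧ psum b U = psum b (V + 1) ∧
      psum a (U + 1) = psum a (L + 3) := by
  by_cases hc : ∃ v < L + 1, 0 < c v
  · obtain ⟨v, hv, hcv⟩ := hc
    obtain ⟨V, -, hV, hcV, hV0⟩ := exists_first_pos (Nat.zero_le v) hv hcv
    have pV : psum c V = 0 :=
      (psum_eq_of_zero (Nat.zero_le V) fun k _ hk => hV0 k (Nat.zero_le k) hk).symm
    by_cases ha : ∃ u, V + 2 ≤ u ∧ u < L + 3 ∧ 0 < a u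
    · obtain ⟨u, hVu, hu, hau⟩ := ha
      obtain ⟨U, hVU, hU, haU, hU0⟩ := exists_last_pos hVu hu hau
      refine ⟨U, V, by omega, by omega, by omega, pV, ?_, ?_⟩
      · refine (psum_eq_of_zero (by omega) fun w hw hwU => ?_).symm
        by_contra hb
        have := h V w U (by omega) hwU (by omega) hcV (by omega)
        omega
      · exact psum_eq_of_zero (by omega) fun k h1 h2 => hU0 k (by omega) h2
    · push Not at ha
      exact ⟨V + 1, V, by omega, by omega, by omega, pV, rfl,
        psum_eq_of_zero (by omega) fun k h1 h2 => Nat.le_zero.mp (ha k h1 h2)⟩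
  · push Not at hc
    exact ⟨L + 2, L + 1, by omega, by omega, by omega,
      (psum_eq_of_zero (Nat.zero_le (L + 1)) fun k _ hk => Nat.le_zero.mp (hc k hk)).symm,
      rfl, rfl⟩

theorem SingleBound.total_le {L m U V : ℕ} {a b c : ℕ → ℕ} (h : SingleBound L m a b c)
    (hVU : V < U) (hU : U ≤ L + 2) (hV : V ≤ L + 1) (hc : psum c V = 0)
    (hb : psum b U = psum b (V + 1)) (ha : psum a (U + 1) = psum a (L + 3)) :
    psum a (L + 2) + psum b (L + 2) + psum c (L + 2) ≤ 2 * m := by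
  have := psum_mono a (show L + 2 ≤ L + 3 by omega)
  rcases Nat.lt_or_ge L V with hVL | hVL
  · obtain rfl : V = L + 1 := by omega
    have h1 := h.lower 0 L (by omega) le_rfl
    have h2 := h.upper (L + 1) (L + 1) (by omega) le_rfl le_rfl
    have := psum_mono c (show L ≤ L + 1 by omega)
    simp only [psum_zero, zero_add, add_assoc, Nat.reduceAdd] at *
    omega
  · have h1 := h.lower 0 V (by omega) hVL
    simp only [psum_zero, zero_add] at h1
    rcases Nat.lt_or_ge U (L + 2) with hUL | hUL
    · have h2 := h.upper U (L + 1) (by omega) (by omega) le_rfl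
      simp only [add_assoc, Nat.reduceAdd] at *
      omega
    · have h2 := h.upper (L + 1) (L + 1) (by omega) le_rfl le_rfl
      obtain rfl : U = L + 2 := by omega
      have := psum_mono b (show L + 1 ≤ L + 2 by omega)
      simp only [add_assoc, Nat.reduceAdd] at *
      omega

theorem splits_of_no_triple {L m : ℕ} {a b c : ℕ → ℕ} (hm : 1 ≤ m) (h1 : SingleBound L m a b c)
    (h2 : DoubleBound L m a b c)
    (h : ∀ v w u, v < w → w < u → u ≤ L + 2 → 0 < c v → 0 < b w → a u = 0) :
    Splits L m a b c := by
  obtain ⟨U, V, hVU, hU, hV, hc, hb, ha⟩ := exists_cut h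
  have hT := h2 U V hVU hU hV
  obtain ⟨a₁, b₁, c₁, a₂, b₂, c₂, ea, eb, ec, s₁, s₂⟩ := h1.exists_split hm
  have qa : ∀ x, psum a x = psum a₁ x + psum a₂ x := fun x => by rw [ea, psum_add]
  have qb : ∀ x, psum b x = psum b₁ x + psum b₂ x := fun x => by rw [eb, psum_add]
  have qc : ∀ x, psum c x = psum c₁ x + psum c₂ x := fun x => by rw [ec, psum_add]
  have ma₁ := psum_mono a₁ (show U + 1 ≤ L + 3 by omega)
  have ma₂ := psum_mono a₂ (show U + 1 ≤ L + 3 by omega)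
  have mb₁ := psum_mono b₁ (show V + 1 ≤ U by omega)
  have mb₂ := psum_mono b₂ (show V + 1 ≤ U by omega)
  have qaU := qa (U + 1)
  have qaL := qa (L + 3)
  have qbU := qb U
  have qbV := qb (V + 1)
  have qcV := qc V
  have t₁ := s₁.total_le hVU hU hV (by omega) (by omega) (by omega)
  have t₂ := s₂.total_le hVU hU hV (by omega) (by omega) (by omega)
  have pa := psum_succ a (L + 2)
  have pb := psum_succ b (L + 2)
  have qa2 := qa (L + 2)
  have qb2 := qb (L + 2)
  have qc2 := qc (L + 2)
  obtain ⟨I, hI⟩ : ∃ I, I = psum a₁ (L + 2) + psum b₁ (L + 2) + psum c₁ (L + 2) := ⟨_, rfl⟩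
  obtain ⟨d, hd⟩ : ∃ d, d = min (a (L + 2)) (2 - I) := ⟨_, rfl⟩
  obtain ⟨e, he⟩ : ∃ e, e = min (b (L + 2)) (2 - I - d) := ⟨_, rfl⟩
  refine ⟨1, le_rfl, by omega, hm, _, _, c₁, _, _, c₂, eq_update_add_update ea (x := d) (by omega),
    eq_update_add_update eb (x := e) (by omega), ec,
    ⟨s₁.congr (fun _ hk => (Function.update_of_ne hk.ne _ _).symm)
      (fun _ hk => (Function.update_of_ne hk.ne _ _).symm), ?_⟩,
    ⟨s₂.congr (fun _ hk => (Function.update_of_ne hk.ne _ _).symm)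
      (fun _ hk => (Function.update_of_ne hk.ne _ _).symm), ?_⟩⟩
  · refine doubleBound_of_total_le ?_
    rw [psum_update_succ, psum_update_succ]
    omega
  · refine doubleBound_of_total_le ?_
    rw [psum_update_succ, psum_update_succ]
    simp only [add_assoc, Nat.reduceAdd] at *
    omega

theorem splits_of_upper_lt {L m : ℕ} {a b c : ℕ → ℕ} (h1 : SingleBound L m a b c)
    (h2 : DoubleBound L m a b c) (hm : 1 ≤ m) (ha0 : 0 < a 0) (hd : 0 < a (L + 2))
    (hup : ∀ u v, 1 ≤ u → u ≤ v → v ≤ L + 1 →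
      psum a (u + 1) + psum b (v + 1) + psum c (L + 2) < m + psum a 1 + psum b u + psum c v) :
    Splits L m a b c := by
  obtain ⟨a', ha'⟩ := exists_eq_single_add ha0
  have ea := psum_eq_add_of_eq_single_add ha'
  by_cases he : 0 < b (L + 2)
  · obtain ⟨b', hb'⟩ := exists_eq_single_add he
    have eb := psum_eq_add_of_eq_single_add hb'
    refine ⟨1, le_rfl, by omega, hm, _, _, 0, a', b', c, ha', hb', by simp,
      ⟨⟨?_, ?_⟩, ?_⟩, ⟨⟨?_, ?_⟩, ?_⟩⟩
    · intro u v huv hv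
      simp only [psum_single, psum_zero_fun]
      split_ifs <;> omega
    · intro u v hu huv hv
      simp only [psum_single, psum_zero_fun]
      split_ifs <;> omega
    · intro u v hvu hu hv
      simp only [psum_single, psum_zero_fun]
      split_ifs <;> omega
    · intro u v huv hv
      have := h1.lower u v huv hv
      simp only [ea, eb] at this
      split_ifs at this <;> omega
    · intro u v hu huv hv
      have := hup u v hu huv hv
      simp only [ea, eb] at this
      split_ifs at this <;> omega
    · intro u v hvu hu hv
      have := h2 u v hvu hu hv
      simp only [ea, eb] at this
      split_ifs at this <;> omega
  · have hd' : 0 < a' (L + 2) := by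
      rw [ha'] at hd
      simpa using hd
    obtain ⟨a'', ha''⟩ := exists_eq_single_add hd'
    have ea' := psum_eq_add_of_eq_single_add ha''
    refine ⟨1, le_rfl, by omega, hm, Pi.single 0 1 + Pi.single (L + 2) 1, 0, 0, a'', b, c,
      by rw [add_assoc, ← ha'', ← ha'], by simp, by simp, ⟨⟨?_, ?_⟩, ?_⟩, ⟨⟨?_, ?_⟩, ?_⟩⟩
    · intro u v huv hv
      simp only [psum_add, psum_single, psum_zero_fun]
      split_ifs <;> omega
    · intro u v hu huv hv
      simp only [psum_add, psum_single, psum_zero_fun]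
      split_ifs <;> omega
    · intro u v hvu hu hv
      simp only [psum_add, psum_single, psum_zero_fun]
      split_ifs <;> omega
    · intro u v huv hv
      have := h1.lower u v huv hv
      simp only [ea, ea'] at this
      split_ifs at this <;> omega
    · intro u v hu huv hv
      have := hup u v hu huv hv
      simp only [ea, ea'] at this
      split_ifs at this <;> omega
    · intro u v hvu hu hv
      have h := h2 u v hvu hu hv
      rcases Nat.lt_or_ge u (L + 2) with huL | huL
      · have l := h1.lower 0 v (by omega) (by omega)
        have w := hup u (L + 1) (by omega) (by omega) le_rfl
        have s := psum_succ b (L + 2)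
        simp only [psum_zero, zero_add, add_assoc, Nat.reduceAdd] at *
        simp only [ea, ea'] at h l w
        split_ifs at h l w <;> omega
      · simp only [ea, ea'] at h
        split_ifs at h <;> omega

theorem splits_of_double_lt {L m : ℕ} {a b c : ℕ → ℕ} (h1 : SingleBound L m a b c)
    (h2 : DoubleBound L m a b c) (hm : 1 ≤ m) (ha0 : 0 < a 0) (hb : 0 < b (L + 1))
    (hc : c (L + 1) = 0)
    (hF : ∀ v ≤ L, psum a (L + 3) + psum b (v + 1) + psum b (L + 3) + psum c (L + 2) <
      2 * m + psum b (L + 2) + psum c v) :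
    Splits L m a b c := by
  obtain ⟨a', ha'⟩ := exists_eq_single_add ha0
  have ea := psum_eq_add_of_eq_single_add ha'
  obtain ⟨b', hb'⟩ := exists_eq_single_add hb
  have eb := psum_eq_add_of_eq_single_add hb'
  have pc : psum c (L + 2) = psum c (L + 1) + c (L + 1) := psum_succ c (L + 1)
  refine ⟨1, le_rfl, by omega, hm, _, _, 0, a', b', c, ha', hb', by simp,
    ⟨⟨?_, ?_⟩, ?_⟩, ⟨⟨?_, ?_⟩, ?_⟩⟩
  · intro u v huv hv
    simp only [psum_single, psum_zero_fun]
    split_ifs <;> omega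
  · intro u v hu huv hv
    simp only [psum_single, psum_zero_fun]
    split_ifs <;> omega
  · intro u v hvu hu hv
    simp only [psum_single, psum_zero_fun]
    split_ifs <;> omega
  · intro u v huv hv
    have := h1.lower u v huv hv
    simp only [ea, eb] at this
    split_ifs at this <;> omega
  · intro u v hu huv hv
    rcases Nat.lt_or_ge v (L + 1) with hvL | hvL
    · have := h1.lower u v huv (by omega)
      simp only [ea, eb] at this
      split_ifs at this <;> omega
    · have := h1.upper u v hu huv hv
      simp only [ea, eb] at this
      split_ifs at this <;> omega
  · intro u v hvu hu hv
    by_cases hcase : u = L + 2 ∧ v ≤ L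
    · obtain ⟨rfl, hvL⟩ := hcase
      have := hF v hvL
      simp only [ea, eb, add_assoc, Nat.reduceAdd] at this ⊢
      split_ifs at this <;> omega
    · have := h2 u v hvu hu hv
      simp only [ea, eb] at this
      split_ifs at this <;> omega

/-- The configuration in which neither a corner nor a triple of entries can be split off. -/
structure Tight (L m u v V : ℕ) (a b c : ℕ → ℕ) : Prop where
  u_pos : 1 ≤ u
  u_le : u ≤ L
  v_lt : v < u
  V_le : V ≤ v
  a_pos : 0 < a u
  b_pos : 0 < b (L + 1)
  c_pos : 0 < c v
  c_last : c (L + 1) = 0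
  a_zero : a 0 = a (L + 1) + b (L + 1)
  b_le : b (L + 1) ≤ a (L + 2)
  psum_a : psum a (u + 1) = m
  psum_b : ∀ x, V < x → x ≤ L + 1 → psum b x = psum b (V + 1)
  psum_c : psum c (v + 1) = psum c (L + 1)
  total : a (L + 1) + a (L + 2) + b (L + 2) + psum b (V + 1) + psum c (L + 1) = m

theorem Tight.lower_add_le {L m u v V : ℕ} {a b c : ℕ → ℕ} (t : Tight L m u v V a b c)
    (h : SingleBound L m a b c) {x y : ℕ} (hxy : x ≤ y) (hy : y ≤ L) :
    psum a (x + 1) + psum b (y + 1) + psum c (L + 1) + 1 ≤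
      m + psum b x + psum c y + (if u ≤ x then 1 else 0) + (if y ≤ v then 1 else 0) := by
  have h0 := h.lower x y hxy hy
  have := t.V_le
  have := t.v_lt
  by_cases hx : u ≤ x
  · rw [if_pos hx]
    omega
  by_cases hyv : y ≤ v
  · rw [if_pos hyv]
    omega
  rw [if_neg hx, if_neg hyv]
  have e1 := t.psum_b (y + 1) (by omega) (by omega)
  have e2 := psum_mono c (show v + 1 ≤ y by omega)
  have e3 := psum_succ c v
  have := t.c_pos
  have := t.psum_c
  by_cases hxv : x ≤ v
  · have := h.lower x v hxv (by omega)
    have := t.psum_b (v + 1) (by omega) (by omega)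
    omega
  · have := t.psum_b x (by omega) (by omega)
    have := psum_mono a (show x + 1 ≤ u by omega)
    have := psum_succ a u
    have := t.psum_a
    have := t.a_pos
    omega

theorem Tight.upper_add_le {L m u v V : ℕ} {a b c : ℕ → ℕ} (t : Tight L m u v V a b c)
    (h : SingleBound L m a b c) {x y : ℕ} (hx : 1 ≤ x) (hxy : x ≤ y) (hy : y ≤ L + 1) :
    psum a (x + 1) + psum b (y + 1) + psum c (L + 2) + 2 ≤
      m + psum a 1 + psum b x + psum c y + (if u ≤ x then 1 else 0) +
        (if y ≤ v then 1 else 0) + (if y = L + 1 then 1 else 0) := by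
  have pc : psum c (L + 2) = psum c (L + 1) + c (L + 1) := psum_succ c (L + 1)
  have pa : psum a 1 = psum a 0 + a 0 := psum_succ a 0
  have := t.c_last
  have := t.a_zero
  have := t.b_pos
  have := t.v_lt
  have := t.u_le
  rcases Nat.lt_or_ge y (L + 1) with hyL | hyL
  · have := t.lower_add_le h hxy (by omega)
    rw [if_neg (show ¬ y = L + 1 by omega)]
    omega
  · obtain rfl : y = L + 1 := by omega
    rw [if_pos rfl]
    have h0 := h.upper x (L + 1) hx hxy hy
    by_cases hux : u ≤ x
    · rw [if_pos hux]
      omega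
    · have l := t.lower_add_le h (show x ≤ L by omega) le_rfl
      have : psum b (L + 1 + 1) = psum b (L + 1) + b (L + 1) := psum_succ b (L + 1)
      have := psum_mono c (show L ≤ L + 1 by omega)
      rw [if_neg hux, if_neg (show ¬ L ≤ v by omega)] at l
      omega

theorem Tight.double_add_le {L m u v V : ℕ} {a b c : ℕ → ℕ} (t : Tight L m u v V a b c)
    (h : DoubleBound L m a b c) {x y : ℕ} (hyx : y < x) (hx : x ≤ L + 2) (hy : y ≤ L + 1) :
    psum a (x + 1) + psum b (y + 1) + psum b (L + 3) + psum c (L + 2) + 2 ≤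
      2 * m + psum b x + psum c y + (if u ≤ x then 1 else 0) + (if y ≤ v then 1 else 0) +
        (if y = L + 1 then 1 else 0) := by
  have h0 := h x y hyx hx hy
  have := t.V_le
  have := t.v_lt
  have := t.u_le
  have := t.a_pos
  have := psum_succ a u
  have e3 := psum_succ c v
  have := t.c_pos
  by_cases hux : u ≤ x
  · by_cases hyv : y ≤ v
    · rw [if_pos hux, if_pos hyv]
      omega
    by_cases hyL : y = L + 1
    · rw [if_pos hux, if_pos hyL]
      omega
    have := h x v (by omega) hx (by omega)
    have := t.psum_b (v + 1) (by omega) (by omega)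
    have := t.psum_b (y + 1) (by omega) (by omega)
    have := psum_mono c (show v + 1 ≤ y by omega)
    rw [if_pos hux]
    omega
  have := psum_mono a (show x + 1 ≤ u by omega)
  by_cases hVx : V < x
  · have := t.psum_b x (by omega) (by omega)
    have := t.psum_b u (by omega) (by omega)
    by_cases hyv : y ≤ v
    · have := h u y (by omega) (by omega) (by omega)
      rw [if_pos hyv]
      omega
    · have := h u v (by omega) (by omega) (by omega)
      have := t.psum_b (v + 1) (by omega) (by omega)
      have := t.psum_b (y + 1) (by omega) (by omega)
      have := psum_mono c (show v + 1 ≤ y by omega)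
      omega
  · rw [if_pos (show y ≤ v by omega)]
    have := psum_mono b (show y + 1 ≤ x by omega)
    have : psum b (L + 3) = psum b (L + 2) + b (L + 2) := psum_succ b (L + 2)
    have : psum b (L + 2) = psum b (L + 1) + b (L + 1) := psum_succ b (L + 1)
    have : psum c (L + 2) = psum c (L + 1) + c (L + 1) := psum_succ c (L + 1)
    have := t.psum_b (L + 1) (by omega) (by omega)
    have := t.c_last
    have := t.psum_a
    have := t.b_le
    have := t.total
    omega

set_option maxHeartbeats 1000000 in
theorem Tight.splits_pentagon {L m u v V : ℕ} {a b c : ℕ → ℕ} (t : Tight L m u v V a b c)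
    (h1 : SingleBound L m a b c) (h2 : DoubleBound L m a b c) : Splits L m a b c := by
  have hvu := t.v_lt
  have huL := t.u_le
  have hu1 := t.u_pos
  have hb := t.b_pos
  have ha0 : 0 < a 0 := by
    have := t.a_zero
    omega
  have hm : 2 ≤ m := by
    have : psum a 1 = psum a 0 + a 0 := psum_succ a 0
    have := psum_mono a hu1
    have := t.psum_a
    have := psum_succ a u
    have := t.a_pos
    omega
  obtain ⟨a', ha'⟩ := exists_eq_single_add ha0
  obtain ⟨a'', ha''⟩ : ∃ g : ℕ → ℕ, a' = Pi.single u 1 + g := by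
    apply exists_eq_single_add
    have := t.a_pos
    rw [ha'] at this
    simpa [Pi.single_eq_of_ne (show u ≠ 0 by omega)] using this
  obtain ⟨a₂, ha₂⟩ : ∃ g : ℕ → ℕ, a'' = Pi.single (L + 2) 1 + g := by
    apply exists_eq_single_add
    have : 0 < a (L + 2) := lt_of_lt_of_le hb t.b_le
    rw [ha', ha''] at this
    simpa [Pi.single_eq_of_ne (show L + 2 ≠ u by omega)] using this
  obtain ⟨b', hb'⟩ := exists_eq_single_add hb
  obtain ⟨c', hc'⟩ := exists_eq_single_add t.c_pos
  have haa : a = (Pi.single 0 1 + Pi.single u 1 + Pi.single (L + 2) 1) + a₂ := by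
    rw [ha', ha'', ha₂]
    simp only [add_assoc]
  have ea : ∀ x, psum a x = (if 0 < x then 1 else 0) + (if u < x then 1 else 0) +
      (if L + 2 < x then 1 else 0) + psum a₂ x := fun x => by
    rw [haa]
    simp only [psum_add, psum_single]
  have eb := psum_eq_add_of_eq_single_add hb'
  have ec := psum_eq_add_of_eq_single_add hc'
  refine ⟨2, by omega, le_rfl, hm, _, _, _, a₂, b', c', haa, hb', hc',
    ⟨⟨?_, ?_⟩, ?_⟩, ⟨⟨?_, ?_⟩, ?_⟩⟩
  · intro x y hxy hy
    simp only [psum_add, psum_single, if_pos (Nat.succ_pos x),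
      if_neg (show ¬ L + 2 < x + 1 by omega), if_neg (show ¬ L + 1 < x by omega),
      if_neg (show ¬ L + 1 < y + 1 by omega), if_pos (show v < L + 1 by omega)]
    split_ifs <;> omega
  · intro x y hx hxy hy
    simp only [psum_add, psum_single, if_pos (Nat.succ_pos x),
      if_neg (show ¬ L + 2 < x + 1 by omega), if_neg (show ¬ L + 2 < 1 by omega),
      if_neg (show ¬ L + 1 < x by omega), if_pos (show v < L + 2 by omega), if_pos one_pos,
      if_neg (show ¬ u < 1 by omega)]
    split_ifs <;> omega
  · intro x y hyx hx hy
    simp only [psum_add, psum_single, if_pos (Nat.succ_pos x), if_pos (show v < L + 2 by omega),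
      if_pos (show L + 1 < L + 3 by omega)]
    split_ifs <;> omega
  · intro x y hxy hy
    have := t.lower_add_le h1 hxy hy
    simp only [ea, eb, ec, if_pos (Nat.succ_pos x),
      if_neg (show ¬ L + 2 < x + 1 by omega), if_neg (show ¬ L + 1 < x by omega),
      if_neg (show ¬ L + 1 < y + 1 by omega), if_pos (show v < L + 1 by omega)] at this
    split_ifs at this <;> omega
  · intro x y hx hxy hy
    have := t.upper_add_le h1 hx hxy hy
    simp only [ea, eb, ec, if_pos (Nat.succ_pos x),
      if_neg (show ¬ L + 2 < x + 1 by omega), if_neg (show ¬ L + 2 < 1 by omega),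
      if_neg (show ¬ L + 1 < x by omega), if_pos (show v < L + 2 by omega), if_pos one_pos,
      if_neg (show ¬ u < 1 by omega)] at this
    split_ifs at this <;> omega
  · intro x y hyx hx hy
    have := t.double_add_le h2 hyx hx hy
    simp only [ea, eb, ec, if_pos (Nat.succ_pos x), if_pos (show v < L + 2 by omega),
      if_pos (show L + 1 < L + 3 by omega)] at this
    split_ifs at this <;> omega

theorem exists_tight {L m v₀ : ℕ} {a b c : ℕ → ℕ} (h1 : SingleBound L m a b c)
    (h2 : DoubleBound L m a b c) (ha0 : 0 < a 0) (hb : 0 < b (L + 1)) (hcL : c (L + 1) = 0)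
    (hA : psum a (L + 1) = m) (hv₀ : v₀ ≤ L) (hcv₀ : 0 < c v₀)
    (hbc : ∀ v w, v < w → w ≤ L → 0 < c v → b w = 0)
    (hup : ∃ u v, 1 ≤ u ∧ u ≤ v ∧ v ≤ L + 1 ∧
      m + psum a 1 + psum b u + psum c v ≤ psum a (u + 1) + psum b (v + 1) + psum c (L + 2))
    (hF : ∃ v ≤ L, 2 * m + psum b (L + 2) + psum c v ≤
      psum a (L + 3) + psum b (v + 1) + psum b (L + 3) + psum c (L + 2)) :
    ∃ u v V, Tight L m u v V a b c := by
  have qb3 : psum b (L + 3) = psum b (L + 2) + b (L + 2) := psum_succ b (L + 2)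
  have qb2 : psum b (L + 2) = psum b (L + 1) + b (L + 1) := psum_succ b (L + 1)
  have qc2 : psum c (L + 2) = psum c (L + 1) + c (L + 1) := psum_succ c (L + 1)
  have qa3 : psum a (L + 3) = psum a (L + 2) + a (L + 2) := psum_succ a (L + 2)
  have qa2 : psum a (L + 2) = psum a (L + 1) + a (L + 1) := psum_succ a (L + 1)
  have qa1 : psum a 1 = 0 + a 0 := psum_succ a 0
  obtain ⟨V, -, hVL, hcV, hV⟩ := exists_first_pos (Nat.zero_le v₀) (Nat.lt_succ_of_le hv₀) hcv₀
  have pcV : psum c V = 0 :=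
    (psum_eq_of_zero (Nat.zero_le V) fun k _ hk => hV k (Nat.zero_le k) hk).symm
  have pbV : ∀ x, V < x → x ≤ L + 1 → psum b x = psum b (V + 1) := fun x h h' =>
    (psum_eq_of_zero h fun j h3 h4 => hbc V j h3 (by omega) hcV).symm
  have pbL := pbV (L + 1) (by omega) le_rfl
  have hC : 0 < psum c (L + 1) := by
    have := psum_succ c V
    have := psum_mono c (show V + 1 ≤ L + 1 by omega)
    omega
  have ha0' : a 0 = a (L + 1) + b (L + 1) := by
    have h3 : psum a (L + 2) + psum b (L + 2) + psum c (L + 2) ≤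
        m + psum a 1 + psum b (L + 1) + psum c (L + 1) :=
      h1.upper (L + 1) (L + 1) (by omega) le_rfl le_rfl
    obtain ⟨x, y, hx, hxy, hy, htight⟩ := hup
    rcases Nat.lt_or_ge y (L + 1) with hyL | hyL
    · have := h1.lower x y hxy (by omega)
      omega
    · obtain rfl : y = L + 1 := by omega
      have e : psum b (L + 1 + 1) = psum b (L + 2) := rfl
      rcases Nat.lt_or_ge x (L + 1) with hxL | hxL
      · have := h1.lower x L (by omega) le_rfl
        have := psum_mono c (show L ≤ L + 1 by omega)
        omega
      · obtain rfl : x = L + 1 := by omega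
        have e' : psum a (L + 1 + 1) = psum a (L + 2) := rfl
        omega
  have htotal : a (L + 1) + a (L + 2) + b (L + 2) + psum b (V + 1) + psum c (L + 1) = m := by
    have h3 : psum a (L + 3) + psum b (V + 1) + psum b (L + 3) + psum c (L + 2) ≤
        2 * m + psum b (L + 2) + psum c V := h2 (L + 2) V (by omega) le_rfl (by omega)
    obtain ⟨y, hy, htight⟩ := hF
    have : psum b (y + 1) ≤ psum b (V + 1) := by
      rw [← pbL]
      exact psum_mono b (by omega)
    omega
  have hd : b (L + 1) ≤ a (L + 2) := by
    have h3 : psum a (L + 2) + psum b (V + 1) + psum b (L + 3) + psum c (L + 2) ≤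
        2 * m + psum b (L + 1) + psum c V := h2 (L + 1) V (by omega) (by omega) (by omega)
    omega
  obtain ⟨u', hu1, hu2, hu3⟩ := exists_pos_of_psum_lt (show psum a 1 < psum a (L + 1) by omega)
  obtain ⟨u, hu, huL, hau, hu0⟩ := exists_last_pos hu1 hu2 hu3
  have pau : psum a (u + 1) = psum a (L + 1) :=
    psum_eq_of_zero (by omega) fun k h3 h4 => hu0 k h3 h4
  obtain ⟨v, hVv, hvL, hcv, hv0⟩ := exists_last_pos le_rfl hVL hcV
  have pcv : psum c (v + 1) = psum c (L + 1) :=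
    psum_eq_of_zero (by omega) fun k h3 h4 => hv0 k h3 h4
  have hvu : v < u := by
    by_contra hvu
    have := h1.lower u u le_rfl (by omega)
    have := psum_mono c (show u ≤ v by omega)
    have := psum_mono b (show u ≤ u + 1 by omega)
    have := psum_succ c v
    omega
  exact ⟨u, v, V, hu, by omega, hvu, hVv, hau, hb, hcv, hcL, ha0', hd, by omega, pbV, pcv,
    htotal⟩

/-- Every triple of rows of positive level splits. -/
theorem splits_of_bounds {L m : ℕ} {a b c : ℕ → ℕ} (hm : 1 ≤ m) (h1 : SingleBound L m a b c)
    (h2 : DoubleBound L m a b c) : Splits L m a b c := by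
  by_cases hcorner : 0 < a 0 ∧ 0 < c (L + 1)
  · exact splits_corners h1 h2 hcorner.1 hcorner.2
  by_cases hno : ∀ v w u, v < w → w < u → u ≤ L + 2 → 0 < c v → 0 < b w → a u = 0
  · exact splits_of_no_triple hm h1 h2 hno
  by_cases htriple : ∃ v w u, v < w ∧ w < u ∧ u ≤ L + 2 ∧
      (w ≤ L ∨ w = L + 1 ∧ psum a (L + 1) < m) ∧ 0 < a u ∧ 0 < b w ∧ 0 < c v
  · obtain ⟨v, w, u, hvw, hwu, hu, hw, ha, hb, hc⟩ := htriple
    exact splits_of_exists_triple h1 h2 hvw hwu hu hw ha hb hc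
  push Not at hno htriple
  obtain ⟨v₀, w, u, hvw, hwu, hu, hcv, hbw, hau⟩ := hno
  have hau' : 0 < a u := Nat.pos_of_ne_zero hau
  obtain rfl : w = L + 1 := by
    by_contra hw
    have := htriple v₀ w u hvw hwu hu (Or.inl (by omega)) hau' hbw
    omega
  obtain rfl : u = L + 2 := by omega
  have hA : psum a (L + 1) = m := by
    have := h1.lower L L le_rfl le_rfl
    have := psum_mono b (show L ≤ L + 1 by omega)
    have := psum_mono c (show L ≤ L + 1 by omega)
    by_contra hlt
    have := htriple v₀ (L + 1) (L + 2) hvw hwu hu (Or.inr ⟨rfl, by omega⟩) hau' hbw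
    omega
  have ha0 : 0 < a 0 := by
    have h3 := h1.upper (L + 1) (L + 1) (by omega) le_rfl le_rfl
    have := psum_mono a (show L + 1 ≤ L + 1 + 1 by omega)
    have := psum_succ b (L + 1)
    have := psum_mono c (show L + 1 ≤ L + 2 by omega)
    have : psum a 1 = 0 + a 0 := psum_succ a 0
    omega
  have hcL : c (L + 1) = 0 := by omega
  by_cases hup : ∀ u v, 1 ≤ u → u ≤ v → v ≤ L + 1 →
      psum a (u + 1) + psum b (v + 1) + psum c (L + 2) < m + psum a 1 + psum b u + psum c v
  · exact splits_of_upper_lt h1 h2 hm ha0 hau' hup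
  by_cases hF : ∀ v ≤ L, psum a (L + 3) + psum b (v + 1) + psum b (L + 3) + psum c (L + 2) <
      2 * m + psum b (L + 2) + psum c v
  · exact splits_of_double_lt h1 h2 hm ha0 hbw hcL hF
  push Not at hup hF
  obtain ⟨u, v, V, ht⟩ := exists_tight h1 h2 ha0 hbw hcL hA (by omega) hcv
    (fun x y hxy hy hcx => by
      by_contra hby
      have := htriple x y (L + 2) hxy (by omega) le_rfl (Or.inl hy) hau' (Nat.pos_of_ne_zero hby)
      omega) hup hF
  exact ht.splits_pentagon h1 h2

/-- Row `p` of a multi-exponent, with columns counted from `3`. -/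
def row (s : ℕ × ℕ → ℕ) (p k : ℕ) : ℕ := s (p, k + 3)

/-- The horizontal path in row `p` with `l` entries, starting in column `x + 3`. -/
def seg (p x l : ℕ) : List (ℕ × ℕ) := (List.range' (x + 3) l).map (Prod.mk p)

theorem seg_succ (p x l : ℕ) : seg p x (l + 1) = (p, x + 3) :: seg p (x + 1) l := by
  simp [seg, List.range'_succ, add_right_comm]

theorem mem_seg {p x l : ℕ} {β : ℕ × ℕ} :
    β ∈ seg p x l ↔ β.1 = p ∧ x + 3 ≤ β.2 ∧ β.2 < x + 3 + l := by
  obtain ⟨p', q⟩ := β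
  simp only [seg, List.mem_map, List.mem_range'_1, Prod.mk.injEq]
  constructor
  · rintro ⟨k, hk, rfl, rfl⟩
    exact ⟨rfl, hk⟩
  · rintro ⟨rfl, hk⟩
    exact ⟨q, hk, rfl, rfl⟩

theorem sum_seg (s : ℕ × ℕ → ℕ) (p x l : ℕ) :
    ((seg p x l).map s).sum + psum (row s p) x = psum (row s p) (x + l) := by
  induction l generalizing x with
  | zero => simp [seg]
  | succ l ih =>
    have := ih (x + 1)
    rw [psum_succ, row, add_right_comm] at this
    rw [seg_succ, List.map_cons, List.sum_cons, ← add_assoc x l 1, ← this]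
    omega

theorem isChain_seg (p x l : ℕ) : (seg p x l).IsChain RootStep := by
  induction l generalizing x with
  | zero => simp [seg]
  | succ l ih =>
    have := ih (x + 1)
    rw [seg_succ]
    cases l with
    | zero => simp [seg]
    | succ l =>
      rw [seg_succ] at this ⊢
      exact List.IsChain.cons_cons (Or.inl ⟨rfl, by ring⟩) this

theorem head?_seg (p x l : ℕ) : (seg p x (l + 1)).head? = some (p, x + 3) := by
  rw [seg_succ, List.head?_cons]

theorem getLast?_seg (p x l : ℕ) : (seg p x (l + 1)).getLast? = some (p, x + l + 3) := by
  simp [seg, List.range'_concat, add_right_comm]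

theorem seg_ne_nil (p x l : ℕ) : seg p x (l + 1) ≠ [] := by
  simp [seg_succ]

/-- A path either stays in its row or splits into a horizontal part and a path which starts in
the next row. -/
theorem isChain_decomp {l : List (ℕ × ℕ)} {p x p' y : ℕ} (hl : l.IsChain RootStep)
    (hhead : l.head? = some (p, x + 3)) (hlast : l.getLast? = some (p', y + 3)) :
    (p' = p ∧ x ≤ y ∧ l = seg p x (y - x + 1)) ∨
      (p < p' ∧ ∃ v l', x ≤ v ∧ l = seg p x (v - x + 1) ++ l' ∧ l'.IsChain RootStep ∧
        l'.head? = some (p + 1, v + 3) ∧ l'.getLast? = some (p', y + 3)) := by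
  induction l generalizing p x with
  | nil => simp at hhead
  | cons β t ih =>
    obtain rfl : β = (p, x + 3) := by simpa using hhead
    cases t with
    | nil =>
      simp only [List.getLast?_singleton, Option.some.injEq, Prod.mk.injEq] at hlast
      obtain ⟨rfl, h⟩ := hlast
      obtain rfl : x = y := by omega
      exact Or.inl ⟨rfl, le_rfl, by simp [seg]⟩
    | cons γ t =>
      rw [List.isChain_cons_cons] at hl
      have hlast' : (γ :: t).getLast? = some (p', y + 3) := by
        rwa [List.getLast?_cons_cons] at hlast
      obtain ⟨p'', q⟩ := γ
      rcases hl.1 with h | h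
      · obtain ⟨rfl, rfl⟩ : p'' = p ∧ q = x + 3 + 1 := h
        have hx : x + 3 + 1 = x + 1 + 3 := by ring
        rcases ih hl.2 (by rw [List.head?_cons, hx]) hlast' with h | ⟨hp, v, l', hv, h, h'⟩
        · obtain ⟨rfl, hxy, h⟩ := h
          refine Or.inl ⟨rfl, by omega, ?_⟩
          rw [h, show y - x = y - (x + 1) + 1 by omega, seg_succ p' x]
        · refine Or.inr ⟨hp, v, l', by omega, ?_, h'⟩
          rw [h, show v - x = v - (x + 1) + 1 by omega, seg_succ p'' x, List.cons_append]
      · obtain ⟨rfl, rfl⟩ : p'' = p + 1 ∧ q = x + 3 := h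
        have hp : p + 1 ≤ p' := by
          rcases ih hl.2 (by rw [List.head?_cons]) hlast' with h | h
          · exact h.1.ge
          · exact h.1.le
        exact Or.inr ⟨hp, x, (p + 1, x + 3) :: t, le_rfl, by simp [seg], hl.2, by simp, hlast'⟩

theorem isChain_same_row {l : List (ℕ × ℕ)} {p x y : ℕ} (hl : l.IsChain RootStep)
    (hhead : l.head? = some (p, x + 3)) (hlast : l.getLast? = some (p, y + 3)) :
    x ≤ y ∧ l = seg p x (y - x + 1) := by
  rcases isChain_decomp hl hhead hlast with h | h
  · exact h.2
  · exact absurd h.1 (lt_irrefl p)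

theorem isChain_next_row {l : List (ℕ × ℕ)} {p x y : ℕ} (hl : l.IsChain RootStep)
    (hhead : l.head? = some (p, x + 3)) (hlast : l.getLast? = some (p + 1, y + 3)) :
    ∃ v, x ≤ v ∧ v ≤ y ∧ l = seg p x (v - x + 1) ++ seg (p + 1) v (y - v + 1) := by
  rcases isChain_decomp hl hhead hlast with h | ⟨-, v, l', hv, rfl, h⟩
  · exact absurd h.1 (by omega)
  · obtain ⟨hvy, rfl⟩ := isChain_same_row h.1 h.2.1 h.2.2
    exact ⟨v, hv, hvy, rfl⟩

theorem isChain_next_next_row {l : List (ℕ × ℕ)} {p x y : ℕ} (hl : l.IsChain RootStep)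
    (hhead : l.head? = some (p, x + 3)) (hlast : l.getLast? = some (p + 2, y + 3)) :
    ∃ u v, x ≤ u ∧ u ≤ v ∧ v ≤ y ∧
      l = seg p x (u - x + 1) ++ (seg (p + 1) u (v - u + 1) ++ seg (p + 2) v (y - v + 1)) := by
  rcases isChain_decomp hl hhead hlast with h | ⟨-, u, l', hu, rfl, h⟩
  · exact absurd h.1 (by omega)
  · obtain ⟨v, huv, hvy, rfl⟩ := isChain_next_row h.1 h.2.1 h.2.2
    exact ⟨u, v, hu, huv, hvy, rfl⟩

theorem isChain_seg_append {p x l : ℕ} {t : List (ℕ × ℕ)} (ht : t.IsChain RootStep)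
    (hhead : t.head? = some (p + 1, x + l + 3)) :
    (seg p x (l + 1) ++ t).IsChain RootStep := by
  refine (isChain_seg p x (l + 1)).append ht ?_
  rw [getLast?_seg, hhead]
  rintro _ ⟨⟩ _ ⟨⟩
  exact Or.inr ⟨rfl, rfl⟩

theorem SingleBound.of_mem_SD {n L m : ℕ} {s : ℕ × ℕ → ℕ} (hL : 2 * n = L + 7)
    (hs : s ∈ SD n 3 m) : SingleBound L m (row s 1) (row s 2) (row s 3) := by
  obtain ⟨-, hs, -⟩ := hs
  constructor
  · intro u v huv hv
    have h := hs (seg 1 0 (u + 1) ++ (seg 2 u (v - u + 1) ++ seg 3 v (L - v + 1))) <| by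
      refine ⟨by simp [seg_ne_nil], ?_, ?_, Or.inl ⟨by simp [head?_seg], ?_⟩⟩
      · exact isChain_seg_append (isChain_seg_append (isChain_seg _ _ _)
          (by rw [head?_seg, show u + (v - u) = v by omega])) (by simp [head?_seg])
      · simp only [List.mem_append, mem_seg, inR]
        rintro β (h | h | h) <;> omega
      · simp only [List.getLast?_append, getLast?_seg, Option.some_or]
        rw [show v + (L - v) + 3 = 2 * n - 3 - 1 by omega]
    have e1 := sum_seg s 1 0 (u + 1)
    have e2 := sum_seg s 2 u (v - u + 1)
    have e3 := sum_seg s 3 v (L - v + 1)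
    rw [show u + (v - u + 1) = v + 1 by omega] at e2
    rw [show v + (L - v + 1) = L + 1 by omega] at e3
    rw [psum_zero, zero_add] at e1
    simp only [List.map_append, List.sum_append] at h
    omega
  · intro u v hu huv hv
    have h := hs (seg 1 1 (u - 1 + 1) ++ (seg 2 u (v - u + 1) ++ seg 3 v (L + 1 - v + 1))) <| by
      refine ⟨by simp [seg_ne_nil], ?_, ?_, Or.inr ⟨by simp [head?_seg], ?_⟩⟩
      · exact isChain_seg_append (isChain_seg_append (isChain_seg _ _ _)
          (by rw [head?_seg, show u + (v - u) = v by omega]))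
          (by rw [show 1 + (u - 1) = u by omega]; simp [head?_seg])
      · simp only [List.mem_append, mem_seg, inR]
        rintro β (h | h | h) <;> omega
      · simp only [List.getLast?_append, getLast?_seg, Option.some_or]
        rw [show v + (L + 1 - v) + 3 = 2 * n - 3 by omega]
    have e1 := sum_seg s 1 1 (u - 1 + 1)
    have e2 := sum_seg s 2 u (v - u + 1)
    have e3 := sum_seg s 3 v (L + 1 - v + 1)
    rw [show 1 + (u - 1 + 1) = u + 1 by omega] at e1
    rw [show u + (v - u + 1) = v + 1 by omega] at e2
    rw [show v + (L + 1 - v + 1) = L + 2 by omega] at e3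
    simp only [List.map_append, List.sum_append] at h
    omega

theorem cB_three {n : ℕ} (hn : 4 ≤ n) : cB n 3 = 2 := by
  rw [cB, if_neg (by omega)]

theorem DoubleBound.of_mem_SD {n L m : ℕ} {s : ℕ × ℕ → ℕ} (hL : 2 * n = L + 7)
    (hs : s ∈ SD n 3 m) : DoubleBound L m (row s 1) (row s 2) (row s 3) := by
  intro u v hvu hu hv
  have h := hs.2.2 (seg 1 0 (u + 1) ++ seg 2 u (L + 2 - u + 1))
    (seg 2 0 (v + 1) ++ seg 3 v (L + 1 - v + 1)) <| by
    refine ⟨2, by norm_num, by norm_num, by simp [seg_ne_nil], by simp [seg_ne_nil],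
      isChain_seg_append (isChain_seg _ _ _) (by simp [head?_seg]),
      isChain_seg_append (isChain_seg _ _ _) (by simp [head?_seg]), ?_, ?_,
      by simp [head?_seg], by simp [head?_seg], ?_, ?_, ?_⟩
    · simp only [List.mem_append, mem_seg, inR]
      rintro β (h | h) <;> omega
    · simp only [List.mem_append, mem_seg, inR]
      rintro β (h | h) <;> omega
    · simp only [List.getLast?_append, getLast?_seg, Option.some_or]
      rw [show u + (L + 2 - u) + 3 = 2 * n - 2 by omega]
    · simp only [List.getLast?_append, getLast?_seg, Option.some_or]
      rw [show v + (L + 1 - v) + 3 = 2 * n - 2 - 1 by omega]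
    · simp only [List.mem_append, mem_seg]
      omega
  have e1 := sum_seg s 1 0 (u + 1)
  have e2 := sum_seg s 2 u (L + 2 - u + 1)
  have e3 := sum_seg s 2 0 (v + 1)
  have e4 := sum_seg s 3 v (L + 1 - v + 1)
  rw [show u + (L + 2 - u + 1) = L + 3 by omega] at e2
  rw [show v + (L + 1 - v + 1) = L + 2 by omega] at e4
  rw [psum_zero, zero_add] at e1 e3
  simp only [List.map_append, List.sum_append] at h
  rw [cB_three (by omega)] at h
  omega

theorem psum_rows_le_of_mem_SD {n L m : ℕ} {s : ℕ × ℕ → ℕ} (hL : 2 * n = L + 7)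
    (hs : s ∈ SD n 3 m) : psum (row s 1) (L + 4) + psum (row s 2) (L + 3) ≤ 2 * m := by
  have h := hs.2.2 (seg 1 0 (L + 3 + 1)) (seg 2 0 (L + 2 + 1)) <| by
    refine ⟨1, by norm_num, by norm_num, seg_ne_nil _ _ _, seg_ne_nil _ _ _,
      isChain_seg _ _ _, isChain_seg _ _ _, ?_, ?_, head?_seg _ _ _, head?_seg _ _ _, ?_, ?_, ?_⟩
    · simp only [mem_seg, inR]
      omega
    · simp only [mem_seg, inR]
      omega
    · rw [getLast?_seg, show 0 + (L + 3) + 3 = 2 * n - 1 by omega]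
    · rw [getLast?_seg, show 0 + (L + 2) + 3 = 2 * n - 1 - 1 by omega]
    · simp only [mem_seg]
      omega
  have e1 := sum_seg s 1 0 (L + 3 + 1)
  have e2 := sum_seg s 2 0 (L + 2 + 1)
  rw [show 0 + (L + 3 + 1) = L + 4 by omega, psum_zero] at e1
  rw [show 0 + (L + 2 + 1) = L + 3 by omega, psum_zero] at e2
  simp only [List.map_append, List.sum_append] at h
  rw [cB_three (by omega)] at h
  omega

/-- For `n ≥ 4` the defining inequalities of `SD n 3 m` in terms of partial sums of rows. -/
theorem mem_SD_of_bounds {n L m : ℕ} {s : ℕ × ℕ → ℕ} (hL : 2 * n = L + 7)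
    (hsupp : ∀ β, ¬ inR n 3 β → s β = 0) (h1 : SingleBound L m (row s 1) (row s 2) (row s 3))
    (h2 : DoubleBound L m (row s 1) (row s 2) (row s 3))
    (h3 : psum (row s 1) (L + 4) + psum (row s 2) (L + 3) ≤ 2 * m) : s ∈ SD n 3 m := by
  refine ⟨hsupp, ?_, ?_⟩
  · rintro l ⟨-, hc, -, ⟨hh, hl⟩ | ⟨hh, hl⟩⟩
    · rw [show 2 * n - 3 - 1 = L + 3 by omega] at hl
      obtain ⟨u, v, -, huv, hv, rfl⟩ := isChain_next_next_row (p := 1) (x := 0) hc hh hl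
      have h := h1.lower u v huv hv
      have e1 := sum_seg s 1 0 (u - 0 + 1)
      have e2 := sum_seg s 2 u (v - u + 1)
      have e3 := sum_seg s 3 v (L - v + 1)
      rw [show 0 + (u - 0 + 1) = u + 1 by omega, psum_zero] at e1
      rw [show u + (v - u + 1) = v + 1 by omega] at e2
      rw [show v + (L - v + 1) = L + 1 by omega] at e3
      simp only [List.map_append, List.sum_append, Nat.reduceAdd]
      omega
    · rw [show 2 * n - 3 = L + 1 + 3 by omega] at hl
      obtain ⟨u, v, hu, huv, hv, rfl⟩ := isChain_next_next_row (p := 1) (x := 1) hc hh hl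
      have h := h1.upper u v hu huv hv
      have e1 := sum_seg s 1 1 (u - 1 + 1)
      have e2 := sum_seg s 2 u (v - u + 1)
      have e3 := sum_seg s 3 v (L + 1 - v + 1)
      rw [show 1 + (u - 1 + 1) = u + 1 by omega] at e1
      rw [show u + (v - u + 1) = v + 1 by omega] at e2
      rw [show v + (L + 1 - v + 1) = L + 2 by omega] at e3
      simp only [List.map_append, List.sum_append, Nat.reduceAdd]
      omega
  · rintro l l' ⟨j, hj, hj', -, -, hc, hc', -, -, hh, hh', hl, hl', hd⟩
    rw [cB_three (by omega)]
    obtain rfl | rfl : j = 1 ∨ j = 2 := by omega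
    · rw [show 2 * n - 1 = L + 3 + 3 by omega] at hl
      rw [show 2 * n - 1 - 1 = L + 2 + 3 by omega] at hl'
      obtain ⟨-, rfl⟩ := isChain_same_row (p := 1) (x := 0) hc hh hl
      obtain ⟨-, rfl⟩ := isChain_same_row (p := 2) (x := 0) hc' hh' hl'
      have e1 := sum_seg s 1 0 (L + 3 - 0 + 1)
      have e2 := sum_seg s 2 0 (L + 2 - 0 + 1)
      rw [show 0 + (L + 3 - 0 + 1) = L + 4 by omega, psum_zero] at e1
      rw [show 0 + (L + 2 - 0 + 1) = L + 3 by omega, psum_zero] at e2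
      simp only [List.map_append, List.sum_append]
      omega
    · rw [show 2 * n - 2 = L + 2 + 3 by omega] at hl
      rw [show 2 * n - 2 - 1 = L + 1 + 3 by omega] at hl'
      obtain ⟨u, -, hu, rfl⟩ := isChain_next_row (p := 1) (x := 0) hc hh hl
      obtain ⟨v, -, hv, rfl⟩ := isChain_next_row (p := 2) (x := 0) hc' hh' hl'
      have hvu : v < u := by
        by_contra! huv
        exact hd (2, u + 3) ⟨by simp [mem_seg], by simp [mem_seg]; omega⟩
      have h := h2 u v hvu hu hv
      have e1 := sum_seg s 1 0 (u - 0 + 1)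
      have e2 := sum_seg s 2 u (L + 2 - u + 1)
      have e3 := sum_seg s 2 0 (v - 0 + 1)
      have e4 := sum_seg s 3 v (L + 1 - v + 1)
      rw [show 0 + (u - 0 + 1) = u + 1 by omega, psum_zero] at e1
      rw [show u + (L + 2 - u + 1) = L + 3 by omega] at e2
      rw [show 0 + (v - 0 + 1) = v + 1 by omega, psum_zero] at e3
      rw [show v + (L + 1 - v + 1) = L + 2 by omega] at e4
      simp only [List.map_append, List.sum_append, Nat.reduceAdd]
      omega

theorem Splits.exists_sum_le {L m : ℕ} {a b c : ℕ → ℕ} (h : Splits L m a b c)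
    (h3 : psum a (L + 4) + psum b (L + 3) ≤ 2 * m) :
    ∃ r, 1 ≤ r ∧ r ≤ 2 ∧ r ≤ m ∧ ∃ a₁ b₁ c₁ a₂ b₂ c₂ : ℕ → ℕ,
      a = a₁ + a₂ ∧ b = b₁ + b₂ ∧ c = c₁ + c₂ ∧
      (SingleBound L r a₁ b₁ c₁ ∧ DoubleBound L r a₁ b₁ c₁ ∧
        psum a₁ (L + 4) + psum b₁ (L + 3) ≤ 2 * r) ∧
      (SingleBound L (m - r) a₂ b₂ c₂ ∧ DoubleBound L (m - r) a₂ b₂ c₂ ∧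
        psum a₂ (L + 4) + psum b₂ (L + 3) ≤ 2 * (m - r)) := by
  obtain ⟨r, hr, hr2, hrm, a₁, b₁, c₁, a₂, b₂, c₂, ha, hb, hc, ⟨hs₁, hd₁⟩, ⟨hs₂, hd₂⟩⟩ := h
  have hsingle : ∀ {k : ℕ} {f g h : ℕ → ℕ} (x : ℕ), SingleBound L k f g h →
      SingleBound L k (Function.update f (L + 3) x) g h := by
    intro k f g h x hf
    refine ⟨fun u v huv hv => ?_, fun u v hu huv hv => ?_⟩
    · rw [psum_update_of_le f x (by omega)]
      exact hf.lower u v huv hv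
    · rw [psum_update_of_le f x (by omega), psum_update_of_le f x (by omega)]
      exact hf.upper u v hu huv hv
  have hdouble : ∀ {k : ℕ} {f g h : ℕ → ℕ} (x : ℕ), DoubleBound L k f g h →
      DoubleBound L k (Function.update f (L + 3) x) g h := by
    intro k f g h x hf u v hvu hu hv
    rw [psum_update_of_le f x (by omega)]
    exact hf u v hvu hu hv
  have e₁ := hd₁ (L + 2) (L + 1) (by omega) le_rfl le_rfl
  have e₂ := hd₂ (L + 2) (L + 1) (by omega) le_rfl le_rfl
  have m₁ := psum_mono c₁ (show L + 1 ≤ L + 2 by omega)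
  have m₂ := psum_mono c₂ (show L + 1 ≤ L + 2 by omega)
  have hsum : psum a (L + 4) = psum a₁ (L + 3) + psum a₂ (L + 3) + a (L + 3) := by
    rw [psum_succ a (L + 3)]
    nth_rw 1 [ha]
    rw [psum_add]
  have hsumb : psum b (L + 3) = psum b₁ (L + 3) + psum b₂ (L + 3) := by rw [hb, psum_add]
  simp only [show L + 2 + 1 = L + 3 from rfl, show L + 1 + 1 = L + 2 from rfl] at e₁ e₂
  obtain ⟨x, hx, hx₁, hx₂⟩ : ∃ x ≤ a (L + 3),
      psum a₁ (L + 3) + x + psum b₁ (L + 3) ≤ 2 * r ∧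
      psum a₂ (L + 3) + (a (L + 3) - x) + psum b₂ (L + 3) ≤ 2 * (m - r) := by
    refine ⟨min (a (L + 3)) (2 * r - psum a₁ (L + 3) - psum b₁ (L + 3)), ?_, ?_, ?_⟩ <;> omega
  refine ⟨r, hr, hr2, hrm, _, b₁, c₁, _, b₂, c₂, eq_update_add_update ha hx, hb, hc,
    ⟨hsingle x hs₁, hdouble x hd₁, ?_⟩, hsingle _ hs₂, hdouble _ hd₂, ?_⟩
  · rwa [psum_update_succ]
  · rwa [psum_update_succ]

/-- The multi-exponent with the given three rows. -/
def ofRows (a b c : ℕ → ℕ) (β : ℕ × ℕ) : ℕ :=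
  if β.2 < 3 then 0
  else if β.1 = 1 then a (β.2 - 3)
  else if β.1 = 2 then b (β.2 - 3)
  else if β.1 = 3 then c (β.2 - 3)
  else 0

theorem row_ofRows_one (a b c : ℕ → ℕ) : row (ofRows a b c) 1 = a := by
  ext k
  simp [row, ofRows]

theorem row_ofRows_two (a b c : ℕ → ℕ) : row (ofRows a b c) 2 = b := by
  ext k
  simp [row, ofRows]

theorem row_ofRows_three (a b c : ℕ → ℕ) : row (ofRows a b c) 3 = c := by
  ext k
  simp [row, ofRows]

theorem ofRows_add (a₁ b₁ c₁ a₂ b₂ c₂ : ℕ → ℕ) :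
    ofRows (a₁ + a₂) (b₁ + b₂) (c₁ + c₂) = ofRows a₁ b₁ c₁ + ofRows a₂ b₂ c₂ := by
  ext β
  simp only [ofRows, Pi.add_apply]
  split_ifs <;> rfl

theorem ofRows_row {n : ℕ} {s : ℕ × ℕ → ℕ} (hs : ∀ β, ¬ inR n 3 β → s β = 0) :
    ofRows (row s 1) (row s 2) (row s 3) = s := by
  ext ⟨p, q⟩
  by_cases hq : q < 3
  · rw [hs _ (fun h => absurd h.2.2.1 (not_le.2 hq)), ofRows, if_pos hq]
  · by_cases hp : p = 1 ∨ p = 2 ∨ p = 3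
    · have hq' : q - 3 + 3 = q := by omega
      rcases hp with rfl | rfl | rfl <;> simp [ofRows, row, hq, hq']
    · rw [hs _ (by simp only [inR]; omega)]
      simp only [ofRows]
      split_ifs <;> first | rfl | omega

/-- Splitting off a summand of level one or two, for `n ≥ 4`. -/
theorem exists_add_of_mem_SD {n m : ℕ} {s : ℕ × ℕ → ℕ} (hn : 4 ≤ n) (hm : 1 ≤ m)
    (hs : s ∈ SD n 3 m) :
    ∃ r, 1 ≤ r ∧ r ≤ 2 ∧ r ≤ m ∧ ∃ s₁ ∈ SD n 3 r, ∃ s₂ ∈ SD n 3 (m - r), s = s₁ + s₂ := by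
  obtain ⟨L, hL⟩ : ∃ L, 2 * n = L + 7 := ⟨2 * n - 7, by omega⟩
  obtain ⟨r, hr, hr2, hrm, a₁, b₁, c₁, a₂, b₂, c₂, ha, hb, hc, h₁, h₂⟩ :=
    (splits_of_bounds hm (.of_mem_SD hL hs) (.of_mem_SD hL hs)).exists_sum_le
      (psum_rows_le_of_mem_SD hL hs)
  have hsum : s = ofRows a₁ b₁ c₁ + ofRows a₂ b₂ c₂ := by
    rw [← ofRows_add, ← ha, ← hb, ← hc, ofRows_row hs.1]
  refine ⟨r, hr, hr2, hrm, ofRows a₁ b₁ c₁, ?_, ofRows a₂ b₂ c₂, ?_, hsum⟩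
  · refine mem_SD_of_bounds hL (fun β hβ => ?_) ?_ ?_ ?_
    · have := hs.1 β hβ
      rw [hsum, Pi.add_apply] at this
      omega
    all_goals rw [row_ofRows_one, row_ofRows_two]
    all_goals try rw [row_ofRows_three]
    exacts [h₁.1, h₁.2.1, h₁.2.2]
  · refine mem_SD_of_bounds hL (fun β hβ => ?_) ?_ ?_ ?_
    · have := hs.1 β hβ
      rw [hsum, Pi.add_apply] at this
      omega
    all_goals rw [row_ofRows_one, row_ofRows_two]
    all_goals try rw [row_ofRows_three]
    exacts [h₂.1, h₂.2.1, h₂.2.2]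

theorem mem_SD_three_three_iff {m : ℕ} {s : ℕ × ℕ → ℕ} :
    s ∈ SD 3 3 m ↔ (∀ β, ¬ inR 3 3 β → s β = 0) ∧
      s (1, 3) + s (1, 4) + s (1, 5) + s (2, 3) + s (2, 4) ≤ m ∧
      s (1, 3) + s (1, 4) + s (2, 3) + s (2, 4) + s (3, 3) ≤ m := by
  have hc : cB 3 3 = 1 := by simp [cB]
  constructor
  · rintro ⟨hs, -, h⟩
    refine ⟨hs, ?_, ?_⟩
    · have := h [(1, 3), (1, 4), (1, 5)] [(2, 3), (2, 4)]
        ⟨1, by simp, by simp, by simp, by simp, isChain_seg 1 0 3, isChain_seg 2 0 2,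
          by simp [inR]⟩
      simp only [List.cons_append, List.nil_append, List.map_cons, List.map_nil, List.sum_cons,
        List.sum_nil, hc] at this
      omega
    · have := h [(1, 3), (1, 4), (2, 4)] [(2, 3), (3, 3)]
        ⟨2, by simp, by simp, by simp, by simp,
          isChain_seg_append (p := 1) (x := 0) (l := 1) (isChain_seg 2 1 1) rfl,
          isChain_seg_append (p := 2) (x := 0) (l := 0) (isChain_seg 3 0 1) rfl, by simp [inR]⟩
      simp only [List.cons_append, List.nil_append, List.map_cons, List.map_nil, List.sum_cons,
        List.sum_nil, hc] at this
      omega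
  · rintro ⟨hs, h₁, h₂⟩
    refine ⟨hs, ?_, ?_⟩
    · rintro l ⟨-, hl, hmem, ⟨-, hlast⟩ | ⟨hhead, hlast⟩⟩
      · exact absurd (hmem _ (List.mem_of_getLast? hlast)) (by simp [inR])
      · obtain ⟨u, v, hu, huv, hv, -⟩ :=
          isChain_next_next_row (p := 1) (x := 1) (y := 0) hl hhead hlast
        omega
    · rintro l l' ⟨j, hj, hj', -, -, hl, hl', -, -, hhead, hhead', hlast, hlast', hd⟩
      obtain rfl | rfl : j = 1 ∨ j = 2 := by omega
      · obtain ⟨-, rfl⟩ := isChain_same_row (p := 1) (x := 0) (y := 2) hl hhead hlast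
        obtain ⟨-, rfl⟩ := isChain_same_row (p := 2) (x := 0) (y := 1) hl' hhead' hlast'
        simp [seg, List.range'_succ, hc]
        omega
      · obtain ⟨u, -, hu, rfl⟩ := isChain_next_row (p := 1) (x := 0) (y := 1) hl hhead hlast
        obtain ⟨v, -, hv, rfl⟩ := isChain_next_row (p := 2) (x := 0) (y := 0) hl' hhead' hlast'
        obtain rfl : v = 0 := by omega
        obtain rfl | rfl : u = 0 ∨ u = 1 := by omega
        · exact absurd (hd (2, 3)) (by simp [mem_seg])
        · simp [seg, List.range'_succ, hc]
          omega

/-- Splitting off a summand of level one, for `n = 3`. -/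
theorem exists_add_of_mem_SD_three_three {m : ℕ} {s : ℕ × ℕ → ℕ} (hm : 1 ≤ m)
    (hs : s ∈ SD 3 3 m) : ∃ s₁ ∈ SD 3 3 1, ∃ s₂ ∈ SD 3 3 (m - 1), s = s₁ + s₂ := by
  rw [mem_SD_three_three_iff] at hs
  obtain ⟨hs, h₁, h₂⟩ := hs
  suffices h : ∃ t ≤ s, (t (1, 3) + t (1, 4) + t (1, 5) + t (2, 3) + t (2, 4) ≤ 1 ∧
      t (1, 3) + t (1, 4) + t (2, 3) + t (2, 4) + t (3, 3) ≤ 1) ∧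
      s (1, 3) + s (1, 4) + s (1, 5) + s (2, 3) + s (2, 4) ≤
        m - 1 + (t (1, 3) + t (1, 4) + t (1, 5) + t (2, 3) + t (2, 4)) ∧
      s (1, 3) + s (1, 4) + s (2, 3) + s (2, 4) + s (3, 3) ≤
        m - 1 + (t (1, 3) + t (1, 4) + t (2, 3) + t (2, 4) + t (3, 3)) by
    obtain ⟨t, hts, ht, h⟩ := h
    refine ⟨t, mem_SD_three_three_iff.2 ⟨fun β hβ => ?_, ht⟩, s - t,
      mem_SD_three_three_iff.2 ⟨fun β hβ => ?_, ?_⟩, (add_tsub_cancel_of_le hts).symm⟩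
    · exact Nat.le_zero.1 (hs β hβ ▸ hts β)
    · rw [Pi.sub_apply, hs β hβ, Nat.zero_sub]
    · have h13 : t (1, 3) ≤ s (1, 3) := hts _
      have h14 : t (1, 4) ≤ s (1, 4) := hts _
      have h15 : t (1, 5) ≤ s (1, 5) := hts _
      have h23 : t (2, 3) ≤ s (2, 3) := hts _
      have h24 : t (2, 4) ≤ s (2, 4) := hts _
      have h33 : t (3, 3) ≤ s (3, 3) := hts _
      simp only [Pi.sub_apply]
      omega
  by_cases hpos : ∃ β ∈ [((1, 3) : ℕ × ℕ), (1, 4), (2, 3), (2, 4)], 0 < s β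
  · obtain ⟨β, hβ, hpos⟩ := hpos
    refine ⟨Pi.single β 1, fun γ => ?_, ?_⟩
    · obtain rfl | hγ := eq_or_ne γ β
      · simpa using Nat.succ_le_of_lt hpos
      · simp [hγ]
    simp only [List.mem_cons, List.not_mem_nil, or_false] at hβ
    rcases hβ with rfl | rfl | rfl | rfl <;> simp <;> omega
  · simp only [List.mem_cons, List.not_mem_nil, or_false, exists_eq_or_imp, exists_eq_left,
      not_or, not_lt, Nat.le_zero] at hpos
    refine ⟨fun β => if β = (1, 5) ∨ β = (3, 3) then min 1 (s β) else 0, fun β => ?_, ?_⟩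
    · dsimp only
      split_ifs <;> simp
    · simp [hpos]
      omega

theorem exists_add_of_mem_SD_of_three_le {n m : ℕ} {s : ℕ × ℕ → ℕ} (hn : 3 ≤ n) (hm : 1 ≤ m)
    (hs : s ∈ SD n 3 m) :
    ∃ r, 1 ≤ r ∧ r ≤ 2 ∧ r ≤ m ∧ ∃ s₁ ∈ SD n 3 r, ∃ s₂ ∈ SD n 3 (m - r), s = s₁ + s₂ := by
  obtain rfl | hn := hn.eq_or_lt
  · exact ⟨1, le_rfl, one_le_two, hm, exists_add_of_mem_SD_three_three hm hs⟩
  · exact exists_add_of_mem_SD hn hm hs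

theorem zero_mem_SD (n i m : ℕ) : 0 ∈ SD n i m := by
  have hsum (l : List (ℕ × ℕ)) : (l.map (0 : ℕ × ℕ → ℕ)).sum = 0 :=
    List.sum_eq_zero (by simp [eq_comm])
  exact ⟨fun _ _ => rfl, fun l _ => by simp [hsum], fun l l' _ => by rw [hsum]; exact Nat.zero_le _⟩

theorem add_mem_SD {n i m m' : ℕ} {s s' : ℕ × ℕ → ℕ} (hs : s ∈ SD n i m)
    (hs' : s' ∈ SD n i m') : s + s' ∈ SD n i (m + m') := by
  have hsum (l : List (ℕ × ℕ)) : (l.map (s + s')).sum = (l.map s).sum + (l.map s').sum :=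
    List.sum_map_add
  refine ⟨fun β hβ => ?_, fun l hl => ?_, fun l l' hl => ?_⟩
  · rw [Pi.add_apply, hs.1 β hβ, hs'.1 β hβ]
  · rw [hsum]
    exact add_le_add (hs.2.1 l hl) (hs'.2.1 l hl)
  · rw [hsum, add_mul]
    exact add_le_add (hs.2.2 l l' hl) (hs'.2.2 l l' hl)

theorem le_psum (f : ℕ → ℕ) {k x : ℕ} (h : k < x) : f k ≤ psum f x :=
  Finset.single_le_sum (fun _ _ => Nat.zero_le _) (Finset.mem_range.2 h)

theorem SD_three_zero {n : ℕ} (hn : 3 ≤ n) : SD n 3 0 = 0 := by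
  refine Set.eq_singleton_iff_unique_mem.2 ⟨zero_mem_SD n 3 0, fun s hs => ?_⟩
  ext ⟨p, q⟩
  by_cases hβ : inR n 3 (p, q)
  swap
  · exact hs.1 _ hβ
  obtain ⟨hp, hp3, hq, hpq⟩ := hβ
  dsimp only at hp hp3 hq hpq
  obtain rfl | hn := hn.eq_or_lt
  · obtain ⟨-, h₁, h₂⟩ := mem_SD_three_three_iff.1 hs
    have hq5 : q ≤ 5 := by omega
    interval_cases p <;> interval_cases q <;> simp_all
  · obtain ⟨L, hL⟩ : ∃ L, 2 * n = L + 7 := ⟨2 * n - 7, by omega⟩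
    obtain ⟨k, rfl⟩ := Nat.exists_eq_add_of_le' hq
    have h₁ := psum_rows_le_of_mem_SD hL hs
    have h₂ := DoubleBound.of_mem_SD hL hs (L + 2) 0 (by omega) le_rfl (by omega)
    have hb := psum_mono (row s 2) (show L + 2 ≤ L + 3 by omega)
    rw [psum_zero] at h₂
    obtain rfl | rfl | rfl : p = 1 ∨ p = 2 ∨ p = 3 := by omega
    · have := le_psum (row s 1) (show k < L + 4 by omega)
      rw [row] at this
      simp only [Pi.zero_apply]
      omega
    · have := le_psum (row s 2) (show k < L + 3 by omega)
      rw [row] at this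
      simp only [Pi.zero_apply]
      omega
    · have := le_psum (row s 3) (show k < L + 2 by omega)
      rw [row] at this
      simp only [Pi.zero_apply]
      omega

theorem sum_SD_two_subset (n i k : ℕ) :
    ∑ _j ∈ Finset.range k, SD n i 2 ⊆ SD n i (2 * k) := by
  induction k with
  | zero => simpa using zero_mem_SD n i 0
  | succ k ih =>
    rw [Finset.sum_range_succ]
    rintro _ ⟨s, hs, t, ht, rfl⟩
    exact add_mem_SD (ih hs) ht

theorem SD_subset_building_blocks {n : ℕ} (hn : 3 ≤ n) (m : ℕ) :
    SD n 3 m ⊆ (∑ _j ∈ Finset.range (m / 2), SD n 3 2) +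
      (if m % 2 = 1 then SD n 3 1 else 0) := by
  induction m using Nat.strong_induction_on with
  | _ m ih =>
    intro s hs
    obtain rfl | hm := Nat.eq_zero_or_pos m
    · simpa [SD_three_zero hn] using hs
    obtain ⟨r, hr, hr2, hrm, s₁, hs₁, s₂, hs₂, rfl⟩ := exists_add_of_mem_SD_of_three_le hn hm hs
    have hrest := ih (m - r) (by omega) hs₂
    obtain rfl | rfl : r = 1 ∨ r = 2 := by omega
    · obtain heven | hodd := Nat.mod_two_eq_zero_or_one (m - 1)
      · rw [if_neg (by omega), add_zero, show (m - 1) / 2 = m / 2 by omega] at hrest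
        rw [if_pos (by omega), add_comm s₁]
        exact Set.add_mem_add hrest hs₁
      · rw [if_pos hodd] at hrest
        rw [if_neg (by omega), add_zero, show m / 2 = (m - 1) / 2 + 1 by omega,
          Finset.sum_range_succ]
        obtain ⟨t, ht, t', ht', rfl⟩ := hrest
        have := Set.add_mem_add ht (add_mem_SD ht' hs₁)
        rwa [← add_assoc, add_comm _ s₁] at this
    · rw [show m / 2 = (m - 2) / 2 + 1 by omega, Finset.sum_range_succ,
        show m % 2 = (m - 2) % 2 by omega, add_right_comm, add_comm s₁]
      exact Set.add_mem_add hrest hs₁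

/-- for `i = 3` and `n ≥ 3`, `S(D, m·ω₃)` is the `⌊m/2⌋`-fold Minkowski
sum of `S(D, 2·ω₃)` with itself, plus one additional summand `S(D, ω₃)` when `m` is
odd (the `0`-fold Minkowski sum being `{0} = 0`). -/
theorem SD_omega3_building_blocks (n : ℕ) (hn : 3 ≤ n) (m : ℕ) :
    SD n 3 m =
      (∑ _j ∈ Finset.range (m / 2), SD n 3 2) +
        (if m % 2 = 1 then SD n 3 1 else 0) := by
  refine (SD_subset_building_blocks hn m).antisymm ?_
  rintro _ ⟨s, hs, t, ht, rfl⟩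
  have hs' := sum_SD_two_subset n 3 (m / 2) hs
  split_ifs at ht with hm
  · have := add_mem_SD hs' ht
    rwa [show 2 * (m / 2) + 1 = m by omega] at this
  · rw [← SD_three_zero hn] at ht
    have := add_mem_SD hs' ht
    rwa [show 2 * (m / 2) + 0 = m by omega] at this
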